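/- arXiv:1210.4586 — 2 statements merged into one kernel-verified Lean document; each statement's English description precedes it below -/
import Mathlib

section
/- Let n ≥ 1, c_u ∈ (0,1), C_u ∈ (1,∞), and let U ⊊ ℝⁿ be a (c_u,C_u)-uniform domain. Then there exist constants K₀, K₁ ∈ (1,∞), depending only on n, c_u and C_u, with the following property: for every ξ ∈ ∂U, every r > 0 with K₀r < diam(U), every function u that is positive and harmonic on U ∩ B(ξ, K₀r), continuous on the closure of U ∩ B(ξ, K₀r), and identically 0 on ∂U ∩ B(ξ, K₀r), and every point x_r ∈ U with |x_r − ξ| ≤ r and dist(x_r, ∂U) ≥ c_u·r/8, one has u(y) ≤ K₁·u(x_r) for all y ∈ U ∩ B(ξ, r). -/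
open Set Metric MeasureTheory ENNReal

noncomputable section

abbrev En (n : ℕ) := EuclideanSpace ℝ (Fin n)

/-- The length of the curve `γ : [0,1] → X`, defined as the supremum of sums
`∑ d(γ(t_i), γ(t_{i-1}))` over partitions `0 ≤ t₀ < … < t_k ≤ 1`. -/
def curveLength {X : Type*} [PseudoEMetricSpace X] (γ : ℝ → X) : ℝ≥0∞ :=
  eVariationOn γ (Set.Icc 0 1)

/-- `γ` is a continuous curve in `Ω` from `x` to `y`. -/
def IsCurveIn {X : Type*} [PseudoEMetricSpace X] (Ω : Set X) (x y : X) (γ : ℝ → X) : Prop :=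
  ContinuousOn γ (Set.Icc 0 1) ∧ Set.MapsTo γ (Set.Icc 0 1) Ω ∧ γ 0 = x ∧ γ 1 = y

/-- The inner (pseudo)metric of `Ω`: the infimum of lengths of continuous curves
joining `x` to `y` inside `Ω`. -/
def innerDist {X : Type*} [PseudoEMetricSpace X] (Ω : Set X) (x y : X) : ℝ≥0∞ :=
  ⨅ (γ : ℝ → X) (_ : IsCurveIn Ω x y γ), curveLength γ

/-- `U` is a `(c,C)`-uniform domain in `ℝⁿ`. -/
def IsUniformDomain {n : ℕ} (c C : ℝ) (U : Set (En n)) : Prop :=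
  IsOpen U ∧ IsConnected U ∧
    ∀ x ∈ U, ∀ y ∈ U, ∃ γ : ℝ → En n, IsCurveIn U x y γ ∧
      curveLength γ ≤ ENNReal.ofReal (C * dist x y) ∧
      ∀ t ∈ Set.Icc (0:ℝ) 1,
        c * min (dist x (γ t)) (dist (γ t) y) ≤ Metric.infDist (γ t) (frontier U)

/-- The Laplacian `∑ ∂²f/∂xᵢ²` of `f : ℝⁿ → ℝ`. -/
def lap {n : ℕ} (f : En n → ℝ) (x : En n) : ℝ :=
  ∑ i : Fin n,
    fderiv ℝ (fun y => fderiv ℝ f y (EuclideanSpace.single i 1)) x (EuclideanSpace.single i 1)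

/-- `f` is harmonic on the open set `V`: twice continuously differentiable with
vanishing Laplacian. -/
def IsHarmonicOn {n : ℕ} (f : En n → ℝ) (V : Set (En n)) : Prop :=
  ContDiffOn ℝ 2 f V ∧ ∀ x ∈ V, lap f x = 0

/-! ### The kernel -/

/-- kernel `(1-|y|²)₊²` -/
def ker (n : ℕ) (y : En n) : ℝ := (max 0 (1 - ‖y‖ ^ 2)) ^ 2

/-- potential `(1-|y|²)₊³` -/
def pot (n : ℕ) (y : En n) : ℝ := (max 0 (1 - ‖y‖ ^ 2)) ^ 3

lemma ker_cont (n : ℕ) : Continuous (ker n) := by unfold ker; fun_prop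

lemma pot_cont (n : ℕ) : Continuous (pot n) := by unfold pot; fun_prop

lemma ker_nonneg (n : ℕ) (y : En n) : 0 ≤ ker n y := by unfold ker; positivity

lemma ker_zero {n : ℕ} {y : En n} (h : 1 ≤ ‖y‖) : ker n y = 0 := by
  unfold ker
  rw [max_eq_left (by nlinarith)]; simp

lemma pot_zero {n : ℕ} {y : En n} (h : 1 ≤ ‖y‖) : pot n y = 0 := by
  unfold pot
  rw [max_eq_left (by nlinarith)]; simp

lemma ker_cs (n : ℕ) : HasCompactSupport (ker n) := by
  apply HasCompactSupport.of_support_subset_isCompact (isCompact_closedBall (0 : En n) 1)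
  intro y hy
  by_contra h
  simp only [mem_closedBall, dist_zero_right, not_le] at h
  exact hy (ker_zero h.le)

lemma pot_cs (n : ℕ) : HasCompactSupport (pot n) := by
  apply HasCompactSupport.of_support_subset_isCompact (isCompact_closedBall (0 : En n) 1)
  intro y hy
  by_contra h
  simp only [mem_closedBall, dist_zero_right, not_le] at h
  exact hy (pot_zero h.le)

lemma cube_deriv (s : ℝ) : HasDerivAt (fun s : ℝ => (max 0 s) ^ 3) (3 * (max 0 s) ^ 2) s := by
  rcases lt_trichotomy s 0 with h | h | h
  · have : (fun s : ℝ => (max 0 s) ^ 3) =ᶠ[nhds s] fun _ => 0 := by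
      filter_upwards [gt_mem_nhds h] with t ht
      rw [max_eq_left ht.le]; simp
    rw [max_eq_left h.le]
    simpa using (hasDerivAt_const s (0:ℝ)).congr_of_eventuallyEq this
  · subst h
    simp only [max_self]
    rw [hasDerivAt_iff_isLittleO]
    simp only [max_self, sub_zero, smul_eq_mul]
    have : (fun x : ℝ => max 0 x ^ 3 - 0 ^ 3 - x * (3 * 0 ^ 2)) = fun x => max 0 x ^ 3 := by
      ext; simp
    rw [this]
    have h1 : (fun x : ℝ => max 0 x ^ 3) =O[nhds 0] fun x : ℝ => x ^ 3 := by
      apply Asymptotics.IsBigO.of_bound 1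
      filter_upwards with x
      rw [norm_pow, norm_pow, one_mul]
      gcongr
      simp only [Real.norm_eq_abs]
      rcases le_total 0 x with h | h
      · rw [max_eq_right h]
      · rw [max_eq_left h]; simp
    refine h1.trans_isLittleO ?_
    have := Asymptotics.isLittleO_pow_pow (𝕜 := ℝ) (m := 1) (n := 3) (by norm_num)
    simpa using this
  · have : (fun s : ℝ => (max 0 s) ^ 3) =ᶠ[nhds s] fun s => s ^ 3 := by
      filter_upwards [lt_mem_nhds h] with t ht
      rw [max_eq_right ht.le]
    rw [max_eq_right h.le]
    simpa using (hasDerivAt_pow 3 s).congr_of_eventuallyEq this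

lemma pot_fderiv (n : ℕ) (y : En n) :
    HasFDerivAt (pot n) ((3 * ker n y) • (-(2 • innerSL ℝ y : En n →L[ℝ] ℝ))) y := by
  have h1 : HasFDerivAt (fun y : En n => 1 - ‖y‖ ^ 2) (-(2 • innerSL ℝ y : En n →L[ℝ] ℝ)) y :=
    ((hasStrictFDerivAt_norm_sq y).hasFDerivAt).const_sub 1
  have h2 := (cube_deriv (1 - ‖y‖ ^ 2)).comp_hasFDerivAt y h1
  exact h2

lemma pot_fderiv_apply (n : ℕ) (y e : En n) :
    fderiv ℝ (pot n) y e = -6 * (ker n y * inner ℝ y e) := by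
  rw [(pot_fderiv n y).fderiv]
  simp; ring

/-! ### Laplacian of rescaled function -/

lemma lap_scale {n : ℕ} {u : En n → ℝ} (hu : ContDiff ℝ 2 u) (x : En n) (t : ℝ) (y : En n) :
    lap (fun y => u (x + t • y)) y = t ^ 2 * lap u (x + t • y) := by
  have hd : ∀ y, HasFDerivAt (fun y : En n => x + t • y) (t • ContinuousLinearMap.id ℝ (En n)) y :=
    fun y => ((hasFDerivAt_id y).const_smul t).const_add x
  have hu1 : Differentiable ℝ u := hu.differentiable (by norm_num)
  have h1 : ∀ y e, fderiv ℝ (fun y => u (x + t • y)) y e = t * fderiv ℝ u (x + t • y) e := by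
    intro y e
    have := (hu1 (x + t • y)).hasFDerivAt.comp y (hd y)
    rw [show (fun y => u (x + t • y)) = u ∘ (fun y => x + t • y) from rfl, this.fderiv]
    simp
  have hu2 : Differentiable ℝ (fderiv ℝ u) :=
    (hu.fderiv_right (m := 1) (by norm_num)).differentiable (by norm_num)
  unfold lap
  rw [Finset.mul_sum]
  refine Finset.sum_congr rfl fun i _ => ?_
  set e : En n := EuclideanSpace.single i 1
  have h3 : Differentiable ℝ (fun z => fderiv ℝ u z e) := by fun_prop
  have := ((h3 (x + t • y)).hasFDerivAt.comp y (hd y)).const_mul t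
  simp only [h1]
  rw [show (fun y => t * fderiv ℝ u (x + t • y) e) =
    fun y => t * ((fun z => fderiv ℝ u z e) ∘ (fun y => x + t • y)) y from rfl, this.fderiv]
  simp; ring

lemma fderiv_euler {n : ℕ} (L : En n →L[ℝ] ℝ) (y : En n) :
    ∑ i : Fin n, inner ℝ y (EuclideanSpace.single i (1:ℝ)) * L (EuclideanSpace.single i 1) = L y := by
  conv_rhs => rw [← (EuclideanSpace.basisFun (Fin n) ℝ).sum_repr y]
  rw [map_sum]
  refine Finset.sum_congr rfl fun i _ => ?_
  simp [EuclideanSpace.inner_single_right]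

lemma ker_euler_zero {n : ℕ} {G : En n → ℝ} (hG : ContDiff ℝ 2 G)
    (h0 : ∀ y ∈ ball (0 : En n) 1, lap G y = 0) :
    ∫ y, ker n y * fderiv ℝ G y y = 0 := by
  have hG2 : ContDiff ℝ 1 (fderiv ℝ G) := hG.fderiv_right (m := 1) (by norm_num)
  have hkc := ker_cont n
  have hpc := pot_cont n
  have hi : ∀ i : Fin n, ∫ y, pot n y * fderiv ℝ (fun z => fderiv ℝ G z (EuclideanSpace.single i 1)) y
      (EuclideanSpace.single i 1) =
      ∫ y, 6 * (ker n y * (inner ℝ y (EuclideanSpace.single i (1:ℝ)) *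
        fderiv ℝ G y (EuclideanSpace.single i 1))) := by
    intro i
    set e : En n := EuclideanSpace.single i 1
    have hg1 : ContDiff ℝ 1 (fun z => fderiv ℝ G z e) := by fun_prop
    have hg : Continuous (fun z => fderiv ℝ G z e) := hg1.continuous
    have hg' : Continuous (fun z => fderiv ℝ (fun z => fderiv ℝ G z e) z e) := by
      have := hg1.continuous_fderiv (by norm_num)
      fun_prop
    rw [integral_mul_fderiv_eq_neg_fderiv_mul_of_integrable]
    · rw [← integral_neg]
      congr 1
      ext y
      rw [pot_fderiv_apply]; ring
    · simp only [pot_fderiv_apply]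
      apply Continuous.integrable_of_hasCompactSupport
      · fun_prop
      · exact ((ker_cs n).mul_right.mul_left).mul_right
    · apply Continuous.integrable_of_hasCompactSupport
      · fun_prop
      · exact (pot_cs n).mul_right
    · apply Continuous.integrable_of_hasCompactSupport
      · fun_prop
      · exact (pot_cs n).mul_right
    · intro x _; exact (pot_fderiv n x).differentiableAt
    · intro x _; exact hg1.differentiable (by norm_num) x
  have hs : ∑ i : Fin n, ∫ y, 6 * (ker n y * (inner ℝ y (EuclideanSpace.single i (1:ℝ)) *
        fderiv ℝ G y (EuclideanSpace.single i 1))) = 6 * ∫ y, ker n y * fderiv ℝ G y y := by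
    rw [← integral_finsetSum, ← integral_const_mul]
    · congr 1; ext y
      rw [← Finset.mul_sum, ← Finset.mul_sum, fderiv_euler]
    · intro i _
      have := hG2.continuous
      apply Continuous.integrable_of_hasCompactSupport
      · fun_prop
      · exact ((ker_cs n).mul_right).mul_left
  have hs2 : ∑ i : Fin n, ∫ y, pot n y * fderiv ℝ (fun z => fderiv ℝ G z (EuclideanSpace.single i 1)) y
      (EuclideanSpace.single i 1) = 0 := by
    rw [← integral_finsetSum]
    · have : ∀ y : En n, ∑ i : Fin n, pot n y * fderiv ℝ (fun z => fderiv ℝ G z (EuclideanSpace.single i 1)) y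
          (EuclideanSpace.single i 1) = 0 := by
        intro y
        rw [← Finset.mul_sum]
        by_cases hy : ‖y‖ < 1
        · have := h0 y (by simpa using hy)
          unfold lap at this
          rw [this]; simp
        · rw [pot_zero (not_lt.1 hy)]; simp
      simp [this]
    · intro i _
      set e : En n := EuclideanSpace.single i 1
      have hg1 : ContDiff ℝ 1 (fun z => fderiv ℝ G z e) := by fun_prop
      have := hg1.continuous_fderiv (by norm_num)
      apply Continuous.integrable_of_hasCompactSupport
      · fun_prop
      · exact (pot_cs n).mul_right
  rw [Finset.sum_congr rfl (fun i _ => hi i), hs] at hs2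
  linarith

lemma mean_value {n : ℕ} {u : En n → ℝ} (hu : ContDiff ℝ 2 u) (hc : HasCompactSupport u)
    (x : En n) {T : ℝ} (hT : 0 < T) (h0 : ∀ y ∈ ball x T, lap u y = 0) :
    ∫ y, ker n y * u (x + T • y) = u x * ∫ y, ker n y := by
  have hkc := ker_cont n
  have huc := hu.continuous
  have hu1 : Differentiable ℝ u := hu.differentiable (by norm_num)
  have hduc : Continuous (fderiv ℝ u) := hu.continuous_fderiv (by norm_num)
  obtain ⟨M, hM⟩ := (hc.fderiv ℝ).exists_bound_of_continuous hduc
  have hder : ∀ t : ℝ, HasDerivAt (fun t : ℝ => ∫ y, ker n y * u (x + t • y))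
      (∫ y, ker n y * fderiv ℝ u (x + t • y) y) t := by
    intro t
    refine (hasDerivAt_integral_of_dominated_loc_of_deriv_le (μ := volume)
      (F := fun t y => ker n y * u (x + t • y))
      (F' := fun t y => ker n y * fderiv ℝ u (x + t • y) y)
      (bound := fun y => ker n y * (M * ‖y‖)) (s := univ)
      Filter.univ_mem ?_ ?_ ?_ ?_ ?_ ?_).2
    · filter_upwards with t
      apply Continuous.aestronglyMeasurable; fun_prop
    · apply Continuous.integrable_of_hasCompactSupport
      · fun_prop
      · exact (ker_cs n).mul_right
    · apply Continuous.aestronglyMeasurable; fun_prop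
    · filter_upwards with y t _
      rw [norm_mul, Real.norm_eq_abs, abs_of_nonneg (ker_nonneg n y)]
      apply mul_le_mul_of_nonneg_left _ (ker_nonneg n y)
      exact (ContinuousLinearMap.le_opNorm _ _).trans (by gcongr; exact hM _)
    · apply Continuous.integrable_of_hasCompactSupport
      · fun_prop
      · exact (ker_cs n).mul_right
    · filter_upwards with y t _
      have h1 : HasDerivAt (fun t : ℝ => x + t • y) y t := by
        simpa using ((hasDerivAt_id t).smul_const y).const_add x
      exact ((hu1 (x + t • y)).hasFDerivAt.comp_hasDerivAt t h1).const_mul _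
  have hz : ∀ t ∈ Ioo 0 T, ∫ y, ker n y * fderiv ℝ u (x + t • y) y = 0 := by
    intro t ht
    have hG : ContDiff ℝ 2 (fun y => u (x + t • y)) := by fun_prop
    have := ker_euler_zero hG (by
      intro y hy
      rw [lap_scale hu, h0, mul_zero]
      simp only [mem_ball, dist_self_add_left, norm_smul, Real.norm_eq_abs, abs_of_pos ht.1,
        dist_zero_right] at hy ⊢
      nlinarith [ht.1, ht.2, norm_nonneg y])
    have hd : ∀ y : En n, fderiv ℝ (fun y => u (x + t • y)) y y = t * fderiv ℝ u (x + t • y) y := by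
      intro y
      have hd : HasFDerivAt (fun y : En n => x + t • y) (t • ContinuousLinearMap.id ℝ (En n)) y :=
        ((hasFDerivAt_id y).const_smul t).const_add x
      have := (hu1 (x + t • y)).hasFDerivAt.comp y hd
      rw [show (fun y => u (x + t • y)) = u ∘ (fun y => x + t • y) from rfl, this.fderiv]
      simp
    simp only [hd] at this
    have h2 : ∫ y, ker n y * (t * fderiv ℝ u (x + t • y) y) =
        t * ∫ y, ker n y * fderiv ℝ u (x + t • y) y := by
      rw [← integral_const_mul]; congr 1; ext y; ring
    rw [h2] at this
    exact (mul_eq_zero.1 this).resolve_left ht.1.ne'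
  obtain ⟨t, ht, hE⟩ := exists_hasDerivAt_eq_slope _ _ hT
    (fun t _ => (hder t).continuousAt.continuousWithinAt) (fun t _ => hder t)
  rw [hz t ht] at hE
  simp only [sub_zero, zero_smul, add_zero] at hE
  replace hE := hE.symm
  rw [_root_.div_eq_zero_iff] at hE
  have h3 := hE.resolve_right hT.ne'
  rw [sub_eq_zero] at h3
  rw [h3, ← integral_const_mul]
  congr 1; ext y; ring

/-! ### Harnack inequality on balls -/

lemma exists_extension {n : ℕ} {u : En n → ℝ} {x : En n} {ρ T : ℝ} (hT : 0 < T) (hTρ : T < ρ)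
    (hu : ContDiffOn ℝ 2 u (ball x ρ)) (hpos : ∀ y ∈ ball x ρ, 0 < u y) :
    ∃ v : En n → ℝ, ContDiff ℝ 2 v ∧ HasCompactSupport v ∧ (∀ y ∈ ball x T, v y = u y) ∧
      ∀ y, 0 ≤ v y := by
  obtain ⟨R, hR1, hR2⟩ := exists_between hTρ
  let χ : ContDiffBump x := ⟨T, R, hT, hR1⟩
  have hz : ∀ y, R ≤ dist y x → χ y = 0 := fun y hy => χ.zero_of_le_dist hy
  refine ⟨fun y => χ y * u y, ?_, ?_, ?_, ?_⟩
  · rw [contDiff_iff_contDiffAt]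
    intro y
    by_cases hy : dist y x < ρ
    · have : ContDiffAt ℝ 2 u y := (hu y hy).contDiffAt (isOpen_ball.mem_nhds hy)
      exact χ.contDiff.contDiffAt.mul this
    · have hy' : y ∈ (closedBall x R)ᶜ := by
        simp only [mem_compl_iff, mem_closedBall, not_le]; linarith
      have : (fun y => χ y * u y) =ᶠ[nhds y] fun _ => 0 := by
        filter_upwards [isClosed_closedBall.isOpen_compl.mem_nhds hy'] with z hz'
        simp only [mem_compl_iff, mem_closedBall, not_le] at hz'
        rw [hz z hz'.le, zero_mul]
      exact contDiffAt_const.congr_of_eventuallyEq this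
  · exact χ.hasCompactSupport.mul_right
  · intro y hy
    have : χ y = 1 := χ.one_of_mem_closedBall (ball_subset_closedBall hy)
    simp [this]
  · intro y
    by_cases hy : dist y x < ρ
    · exact mul_nonneg χ.nonneg (hpos y hy).le
    · simp only [hz y (by linarith), zero_mul, le_refl]

lemma lap_congr {n : ℕ} {u v : En n → ℝ} {y : En n} (h : u =ᶠ[nhds y] v) : lap u y = lap v y := by
  unfold lap
  refine Finset.sum_congr rfl fun i _ => ?_
  have : (fun z => fderiv ℝ u z (EuclideanSpace.single i 1)) =ᶠ[nhds y]
      (fun z => fderiv ℝ v z (EuclideanSpace.single i 1)) := by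
    filter_upwards [h.fderiv (𝕜 := ℝ)] with z hz
    rw [hz]
  rw [this.fderiv_eq]

lemma ker_compare {n : ℕ} {w d : En n} (hd : ‖d‖ ≤ 1) :
    ker n (d + (3:ℝ) • w) ≤ 4 * ker n w := by
  by_cases h : 1 ≤ ‖d + (3:ℝ) • w‖
  · rw [ker_zero h]; have := ker_nonneg n w; positivity
  · push Not at h
    have h1 : ‖(3:ℝ) • w‖ ≤ 2 := by
      have := norm_sub_le (d + (3:ℝ) • w) d
      rw [add_sub_cancel_left] at this
      linarith
    rw [norm_smul] at h1
    norm_num at h1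
    have h2 : ‖w‖ ^ 2 ≤ 4 / 9 := by
      have := norm_nonneg w
      nlinarith
    have h3 : (1/2 : ℝ) ≤ max 0 (1 - ‖w‖^2) := le_max_of_le_right (by linarith)
    have h4 : max 0 (1 - ‖d + (3:ℝ) • w‖^2) ≤ 1 := max_le (by norm_num) (by nlinarith [norm_nonneg (d + (3:ℝ) • w)])
    have h5 : (0:ℝ) ≤ max 0 (1 - ‖d + (3:ℝ) • w‖^2) := le_max_left _ _
    unfold ker
    nlinarith

lemma ker_int_pos (n : ℕ) : 0 < ∫ y, ker n y := by
  apply (ker_cont n).integral_pos_of_hasCompactSupport_nonneg_nonzero (ker_cs n) (ker_nonneg n)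
    (x := 0)
  simp [ker]

theorem harnack_ball {n : ℕ} {u : En n → ℝ} {x y : En n} {ρ : ℝ} (hρ : 0 < ρ)
    (hu : ContDiffOn ℝ 2 u (ball x ρ)) (hpos : ∀ y ∈ ball x ρ, 0 < u y)
    (hl : ∀ y ∈ ball x ρ, lap u y = 0) (hy : dist y x ≤ ρ / 4) :
    u y ≤ 4 * 3 ^ n * u x := by
  obtain ⟨v, hv, hvc, hvu, hv0⟩ := exists_extension (T := 7 * ρ / 8) (by linarith) (by linarith) hu hpos
  have hvl : ∀ z ∈ ball x (7 * ρ / 8), lap v z = 0 := by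
    intro z hz
    rw [← hl z (ball_subset_ball (by linarith) hz)]
    apply lap_congr
    filter_upwards [isOpen_ball.mem_nhds hz] with w hw using hvu w hw
  rw [← hvu x (mem_ball_self (by linarith)), ← hvu y (by rw [mem_ball]; linarith)]
  set t := ρ / 4 with ht
  have ht0 : 0 < t := by positivity
  have hy1 := mean_value hv hvc y ht0 (fun z hz => hvl z (by
    rw [mem_ball] at hz ⊢
    have := dist_triangle z y x
    linarith))
  have hx1 := mean_value hv hvc x (T := 3 * t) (by positivity) (fun z hz => hvl z (by
    rw [mem_ball] at hz ⊢
    linarith))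
  have hkc := ker_cont n
  have hvcont := hv.continuous
  -- change of variables
  set d : En n := t⁻¹ • (x - y) with hd
  have hdn : ‖d‖ ≤ 1 := by
    rw [hd, norm_smul, norm_inv, Real.norm_eq_abs, abs_of_pos ht0, ← dist_eq_norm, dist_comm,
      inv_mul_le_iff₀ ht0]
    linarith
  have hcv : ∫ w, ker n (d + (3:ℝ) • w) * v (x + (3 * t) • w) =
      ((3:ℝ) ^ n)⁻¹ * ∫ w, ker n w * v (y + t • w) := by
    have e1 : ∀ w : En n, ker n (d + (3:ℝ) • w) * v (x + (3 * t) • w) =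
        (fun z => ker n (d + z) * v (y + t • (d + z))) ((3:ℝ) • w) := by
      intro w
      simp only
      congr 2
      rw [hd, smul_add, smul_smul, mul_inv_cancel₀ ht0.ne', one_smul, smul_smul, mul_comm t 3]
      abel
    rw [integral_congr_ae (Filter.Eventually.of_forall e1)]
    rw [Measure.integral_comp_smul volume (fun z => ker n (d + z) * v (y + t • (d + z))) 3]
    rw [integral_add_left_eq_self (fun z => ker n z * v (y + t • z)) d]
    simp
  have hle : ∫ w, ker n (d + (3:ℝ) • w) * v (x + (3 * t) • w) ≤
      ∫ w, 4 * (ker n w * v (x + (3 * t) • w)) := by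
    apply integral_mono_of_nonneg
    · filter_upwards with w using mul_nonneg (ker_nonneg _ _) (hv0 _)
    · apply Continuous.integrable_of_hasCompactSupport
      · fun_prop
      · exact (ker_cs n).mul_right.mul_left
    · filter_upwards with w
      rw [← mul_assoc]
      exact mul_le_mul_of_nonneg_right (ker_compare hdn) (hv0 _)
  rw [hcv, integral_const_mul, hy1, hx1] at hle
  have hI := ker_int_pos n
  have h3 : (0:ℝ) < 3 ^ n := by positivity
  rw [inv_mul_le_iff₀ h3] at hle
  have : v y * ∫ y, ker n y ≤ (4 * 3 ^ n * v x) * ∫ y, ker n y := by linarith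
  exact le_of_mul_le_mul_right this hI

/-! ### Maximum principle and growth lemma -/

lemma second_deriv_le {n : ℕ} {g : En n → ℝ} {p e : En n} (hg : ContDiffAt ℝ 2 g p)
    (hm : IsLocalMax g p) : fderiv ℝ (fun y => fderiv ℝ g y e) p e ≤ 0 := by
  by_contra hpos
  push Not at hpos
  set h : ℝ → ℝ := fun t => g (p + t • e) with hh
  have hl : ∀ t : ℝ, HasDerivAt (fun t : ℝ => p + t • e) e t := by
    intro t
    simpa using ((hasDerivAt_id t).smul_const e).const_add p
  have hl0 : Filter.Tendsto (fun t : ℝ => p + t • e) (nhds 0) (nhds p) := by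
    have := (hl 0).continuousAt.tendsto
    simpa using this
  have hgd : ∀ᶠ y in nhds p, DifferentiableAt ℝ g y := by
    have := hg.eventually (by simp)
    filter_upwards [this] with y hy using hy.differentiableAt (by norm_num)
  have hd1 : ∀ᶠ t in nhds (0:ℝ), deriv h t = fderiv ℝ g (p + t • e) e := by
    filter_upwards [hl0.eventually hgd] with t ht
    exact (ht.hasFDerivAt.comp_hasDerivAt t (hl t)).deriv
  have hmh : IsLocalMax h 0 := by
    have := hl0.eventually hm
    filter_upwards [this] with t ht
    simpa [hh] using ht
  have hd2 : deriv (deriv h) 0 = fderiv ℝ (fun y => fderiv ℝ g y e) p e := by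
    have e1 : deriv h =ᶠ[nhds 0] fun t => fderiv ℝ g (p + t • e) e := hd1
    rw [e1.deriv_eq]
    have h2 : DifferentiableAt ℝ (fderiv ℝ g) p :=
      (hg.fderiv_right (m := 1) (by norm_num)).differentiableAt (by norm_num)
    have h3 : DifferentiableAt ℝ (fun y => fderiv ℝ g y e) (p + (0:ℝ) • e) := by
      simp only [zero_smul, add_zero]; fun_prop
    have := (h3.hasFDerivAt.comp_hasDerivAt (0:ℝ) (hl 0)).deriv
    simpa [Function.comp_def] using this
  have hmin : IsLocalMin h 0 := by
    apply isLocalMin_of_deriv_deriv_pos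
    · rw [hd2]; exact hpos
    · exact hmh.deriv_eq_zero
    · have : ContinuousAt g (p + (0:ℝ) • e) := by simpa using hg.continuousAt
      exact ContinuousAt.comp (f := fun t : ℝ => p + t • e) this (hl 0).continuousAt
  have hconst : h =ᶠ[nhds 0] fun _ => h 0 := by
    filter_upwards [hmh, hmin] with t h1 h2 using le_antisymm h1 h2
  have hd3 : deriv h =ᶠ[nhds 0] fun _ => 0 := by
    filter_upwards [hconst.eventuallyEq_nhds] with t ht
    rw [ht.deriv_eq]; simp
  rw [← hd2, hd3.deriv_eq] at hpos
  simp at hpos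

lemma lap_le_of_localMax {n : ℕ} {g : En n → ℝ} {p : En n} (hg : ContDiffAt ℝ 2 g p)
    (hm : IsLocalMax g p) : lap g p ≤ 0 :=
  Finset.sum_nonpos fun _ _ => second_deriv_le hg hm

lemma lap_add_const_mul {n : ℕ} {f g : En n → ℝ} {p : En n} (a : ℝ) (hf : ContDiffAt ℝ 2 f p)
    (hg : ContDiffAt ℝ 2 g p) : lap (fun y => f y + a * g y) p = lap f p + a * lap g p := by
  have h1 : ∀ {f : En n → ℝ}, ContDiffAt ℝ 2 f p → ∀ᶠ y in nhds p, DifferentiableAt ℝ f y := by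
    intro f hf
    filter_upwards [hf.eventually (by simp)] with y hy using hy.differentiableAt (by norm_num)
  have h2 : ∀ {f : En n → ℝ}, ContDiffAt ℝ 2 f p → ∀ e, DifferentiableAt ℝ (fun y => fderiv ℝ f y e) p := by
    intro f hf e
    have : DifferentiableAt ℝ (fderiv ℝ f) p :=
      (hf.fderiv_right (m := 1) (by norm_num)).differentiableAt (by norm_num)
    fun_prop
  unfold lap
  rw [Finset.mul_sum, ← Finset.sum_add_distrib]
  refine Finset.sum_congr rfl fun i _ => ?_
  set e : En n := EuclideanSpace.single i 1
  have e1 : (fun y => fderiv ℝ (fun y => f y + a * g y) y e) =ᶠ[nhds p]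
      fun y => fderiv ℝ f y e + a * fderiv ℝ g y e := by
    filter_upwards [h1 hf, h1 hg] with y hy1 hy2
    have := (hy1.hasFDerivAt.add (hy2.hasFDerivAt.const_mul a)).fderiv
    have hsum : fderiv ℝ (fun y => f y + a * g y) y = fderiv ℝ f y + a • fderiv ℝ g y := this
    rw [hsum]; simp
  rw [e1.fderiv_eq]
  have := ((h2 hf e).hasFDerivAt.add ((h2 hg e).hasFDerivAt.const_mul a)).fderiv
  have hsum : fderiv ℝ (fun y => fderiv ℝ f y e + a * fderiv ℝ g y e) p =
    fderiv ℝ (fun y => fderiv ℝ f y e) p + a • fderiv ℝ (fun y => fderiv ℝ g y e) p := this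
  rw [hsum]; simp

/-- Gaussian barrier -/
def bar {n : ℕ} (α b : ℝ) (z y : En n) : ℝ := Real.exp (-α * ‖y - z‖ ^ 2) - b

lemma bar_contDiff {n : ℕ} (α b : ℝ) (z : En n) : ContDiff ℝ 2 (bar α b z) := by
  unfold bar
  have : ContDiff ℝ 2 (fun y : En n => ‖y - z‖ ^ 2) := (contDiff_id.sub contDiff_const).norm_sq ℝ
  fun_prop

lemma lap_bar {n : ℕ} (α b : ℝ) (z y : En n) :
    lap (bar α b z) y = Real.exp (-α * ‖y - z‖ ^ 2) * (4 * α ^ 2 * ‖y - z‖ ^ 2 - 2 * n * α) := by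
  have h0 : ∀ y : En n, HasFDerivAt (fun y : En n => ‖y - z‖ ^ 2) (2 • innerSL ℝ (y - z) : En n →L[ℝ] ℝ) y := by
    intro y
    have h1 := (hasStrictFDerivAt_norm_sq (y - z)).hasFDerivAt
    have h2 : HasFDerivAt (fun y : En n => y - z) (ContinuousLinearMap.id ℝ (En n)) y :=
      (hasFDerivAt_id y).sub_const z
    have := h1.comp y h2
    rwa [ContinuousLinearMap.comp_id] at this
  have hE : ∀ y : En n, HasFDerivAt (fun y : En n => Real.exp (-α * ‖y - z‖ ^ 2))
      (Real.exp (-α * ‖y - z‖ ^ 2) • (-α) • (2 • innerSL ℝ (y - z) : En n →L[ℝ] ℝ)) y :=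
    fun y => ((h0 y).const_mul (-α)).exp
  have h1 : ∀ y e : En n, fderiv ℝ (bar α b z) y e =
      Real.exp (-α * ‖y - z‖ ^ 2) * (-2 * α * inner ℝ (y - z) e) := by
    intro y e
    have : HasFDerivAt (bar α b z) _ y := (hE y).sub_const b
    rw [this.fderiv]
    simp [inner_sub_left]; ring
  have h2 : ∀ e : En n, fderiv ℝ (fun y => fderiv ℝ (bar α b z) y e) y e =
      Real.exp (-α * ‖y - z‖ ^ 2) * (4 * α ^ 2 * inner ℝ (y - z) e ^ 2 - 2 * α * ‖e‖ ^ 2) := by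
    intro e
    simp only [h1]
    have h3 : HasFDerivAt (fun y : En n => inner ℝ (y - z) e) (innerSL ℝ e : En n →L[ℝ] ℝ) y := by
      have : HasFDerivAt (fun y : En n => (innerSL ℝ e : En n →L[ℝ] ℝ) (y - z)) _ y :=
        (innerSL ℝ e : En n →L[ℝ] ℝ).hasFDerivAt.comp y ((hasFDerivAt_id y).sub_const z)
      simpa [real_inner_comm] using this
    have := (hE y).mul (h3.const_mul (-2 * α))
    have h' : fderiv ℝ (fun y : En n => Real.exp (-α * ‖y - z‖ ^ 2) * (-2 * α * inner ℝ (y - z) e)) y = _ :=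
      this.fderiv
    rw [h']
    simp [inner_sub_left]; ring
  unfold lap
  simp only [h2]
  rw [← Finset.mul_sum, Finset.sum_sub_distrib, ← Finset.mul_sum]
  congr 2
  · congr 1
    rw [EuclideanSpace.norm_sq_eq]
    refine Finset.sum_congr rfl fun i _ => ?_
    simp [EuclideanSpace.inner_single_right]
  · simp; ring

theorem growth (n : ℕ) (hn : 1 ≤ n) (κ : ℝ) (hκ : 0 < κ) :
    ∃ θ : ℝ, 0 < θ ∧ θ < 1 ∧ ∀ (U : Set (En n)) (u : En n → ℝ) (x z : En n) (s m M : ℝ),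
      IsOpen U → 0 < s → 0 ≤ m → m ≤ M → x ∈ U → dist x z ≤ s / 4 →
      ContinuousOn u (closure U ∩ closedBall z (s / 2)) →
      (∀ y ∈ U ∩ ball z (s / 2), ContDiffAt ℝ 2 u y ∧ lap u y = 0) →
      (∀ y ∈ frontier U ∩ closedBall z (s / 2), u y = 0) →
      (∀ y ∈ U ∩ closedBall z (s / 2), u y ≤ M) →
      (∀ y ∈ U ∩ closedBall z (κ * s), u y ≤ m) →
      u x ≤ (1 - θ) * M + θ * m := by
  set A : ℝ := n / κ ^ 2 with hA
  have hn' : (1:ℝ) ≤ n := by exact_mod_cast hn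
  have hA0 : 0 < A := by positivity
  have hθ0 : Real.exp (-A / 4) < Real.exp (-A / 16) := Real.exp_lt_exp.2 (by linarith)
  refine ⟨Real.exp (-A / 16) - Real.exp (-A / 4), by linarith, ?_, ?_⟩
  · have h1 : Real.exp (-A / 16) < 1 := by
      rw [← Real.exp_zero]; exact Real.exp_lt_exp.2 (by linarith)
    have h2 := Real.exp_pos (-A / 4)
    linarith
  intro U u x z s m M hU hs hm hmM hx hxz huc hharm hbd hM hmm
  rcases hmM.eq_or_lt with rfl | hlt
  · have := hM x ⟨hx, by rw [mem_closedBall]; linarith⟩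
    linarith
  set α : ℝ := A / s ^ 2 with hα
  have hα0 : 0 < α := by positivity
  set φ : En n → ℝ := bar α (Real.exp (-A / 4)) z with hφ
  have hφc : ContDiff ℝ 2 φ := bar_contDiff _ _ _
  set g : En n → ℝ := fun y => u y + (M - m) * φ y with hg
  have hαs : α * s ^ 2 = A := by rw [hα]; field_simp
  have hφ1 : ∀ y, φ y ≤ 1 := by
    intro y
    have h1 : Real.exp (-α * ‖y - z‖ ^ 2) ≤ 1 := Real.exp_le_one_iff.2 (by nlinarith [sq_nonneg ‖y - z‖])
    have h2 := Real.exp_pos (-A / 4)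
    simp only [hφ, bar]; linarith
  have hMu : ∀ y ∈ closure U ∩ closedBall z (s/2), u y ≤ M := by
    rintro y ⟨hy1, hy2⟩
    by_cases hy : y ∈ U
    · exact hM y ⟨hy, hy2⟩
    · rw [hbd y ⟨⟨hy1, by rwa [hU.interior_eq]⟩, hy2⟩]; linarith
  have key : g x ≤ M := by
    by_cases hxs : dist x z ≤ κ * s
    · have h1 := hmm x ⟨hx, hxs⟩
      have := hφ1 x
      simp only [hg]; nlinarith
    push Not at hxs
    set K : Set (En n) := (closure U ∩ closedBall z (s / 2)) \ ball z (κ * s) with hK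
    have hKc : IsCompact K := by
      have : IsCompact (closure U ∩ closedBall z (s / 2)) :=
        (isCompact_closedBall z (s/2)).inter_left isClosed_closure
      exact this.diff isOpen_ball
    have hgc : ContinuousOn g K :=
      (huc.mono sdiff_subset).add (continuousOn_const.mul hφc.continuous.continuousOn)
    have hxK : x ∈ K := ⟨⟨subset_closure hx, by rw [mem_closedBall]; linarith⟩, by
      rw [mem_ball]; linarith⟩
    obtain ⟨p, hpK, hpmax⟩ := hKc.exists_isMaxOn ⟨x, hxK⟩ hgc
    refine (hpmax hxK).trans ?_
    obtain ⟨⟨hp1, hp2⟩, hp3⟩ := hpK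
    rw [mem_closedBall] at hp2
    rw [mem_ball, not_lt] at hp3
    by_cases hpU : p ∉ U
    · have : u p = 0 := hbd p ⟨⟨hp1, by rwa [hU.interior_eq]⟩, hp2⟩
      have := hφ1 p
      simp only [hg]; nlinarith
    push Not at hpU
    rcases hp2.eq_or_lt with h | h
    · have h1 : φ p = 0 := by
        simp only [hφ, bar]
        rw [← dist_eq_norm, h, sub_eq_zero]
        congr 1
        rw [← hαs]; ring
      have := hM p ⟨hpU, hp2⟩
      simp only [hg, h1]; linarith
    rcases hp3.eq_or_lt with h' | h'
    · have h1 := hmm p ⟨hpU, by rw [mem_closedBall]; linarith⟩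
      have := hφ1 p
      simp only [hg]; nlinarith
    exfalso
    have hnh : K ∈ nhds p := by
      have : U ∩ ball z (s/2) ∩ (closedBall z (κ * s))ᶜ ∈ nhds p := by
        refine ((hU.inter isOpen_ball).inter isClosed_closedBall.isOpen_compl).mem_nhds ⟨⟨hpU, h⟩, ?_⟩
        simp only [mem_compl_iff, mem_closedBall, not_le]; exact h'
      refine Filter.mem_of_superset this ?_
      rintro q ⟨⟨hq1, hq2⟩, hq3⟩
      exact ⟨⟨subset_closure hq1, ball_subset_closedBall hq2⟩, fun hq => hq3 (ball_subset_closedBall hq)⟩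
    have hloc : IsLocalMax g p := hpmax.isLocalMax hnh
    obtain ⟨hc, hl⟩ := hharm p ⟨hpU, h⟩
    have h1 := lap_le_of_localMax (hc.add (contDiffAt_const.mul hφc.contDiffAt)) hloc
    have h2 : lap g p = lap u p + (M - m) * lap φ p := lap_add_const_mul (M - m) hc hφc.contDiffAt
    have h1' : lap g p ≤ 0 := h1
    rw [h2, hl, zero_add, hφ, lap_bar] at h1'
    have h3 : 0 < 4 * α ^ 2 * ‖p - z‖ ^ 2 - 2 * n * α := by
      rw [dist_eq_norm] at h'
      have h4 : (κ * s) ^ 2 < ‖p - z‖ ^ 2 := by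
        apply pow_lt_pow_left₀ h' (by positivity) (by norm_num)
      have h5 : α * (κ * s) ^ 2 = n := by
        rw [mul_pow, mul_left_comm, hαs, hA]; field_simp
      have h6 : (n:ℝ) < α * ‖p - z‖ ^ 2 := by nlinarith
      nlinarith
    have h4 : 0 < (M - m) * (Real.exp (-α * ‖p - z‖ ^ 2) * (4 * α ^ 2 * ‖p - z‖ ^ 2 - 2 * n * α)) :=
      mul_pos (by linarith) (mul_pos (Real.exp_pos _) h3)
    linarith
  have hφx : Real.exp (-A / 16) - Real.exp (-A / 4) ≤ φ x := by
    simp only [hφ, bar]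
    have : Real.exp (-A / 16) ≤ Real.exp (-α * ‖x - z‖ ^ 2) := by
      apply Real.exp_le_exp.2
      rw [← dist_eq_norm, ← hαs]
      have : dist x z ^ 2 ≤ (s / 4) ^ 2 := pow_le_pow_left₀ dist_nonneg hxz 2
      nlinarith
    linarith
  simp only [hg] at key
  nlinarith

/-! ### Harnack chains in uniform domains -/

/-- the standing assumptions -/
structure Ctx {n : ℕ} (c C : ℝ) (U : Set (En n)) (ξ : En n) (R : ℝ) (u : En n → ℝ) : Prop where
  hc : 0 < c
  hc1 : c < 1
  hC : 1 < C
  hU : IsUniformDomain c C U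
  hξ : ξ ∈ frontier U
  hpos : ∀ z ∈ U ∩ ball ξ R, 0 < u z
  hharm : IsHarmonicOn u (U ∩ ball ξ R)

lemma ball_subset_of_infDist {n : ℕ} {U : Set (En n)} (hU : IsOpen U) {x : En n} {ρ : ℝ}
    (hρ : 0 < ρ) (hx : x ∈ U) (h : ρ ≤ infDist x (frontier U)) : ball x ρ ⊆ U := by
  apply IsPreconnected.subset_left_of_subset_union (v := (closure U)ᶜ) hU
    isClosed_closure.isOpen_compl
  · exact disjoint_compl_right.mono_left subset_closure |>.symm.symm
  · intro y hy
    by_contra hcon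
    simp only [mem_union, mem_compl_iff, not_or, not_not] at hcon
    have hf : y ∈ frontier U := ⟨hcon.2, by rw [hU.interior_eq]; exact hcon.1⟩
    have := infDist_le_dist_of_mem (x := x) hf
    rw [mem_ball, dist_comm] at hy
    linarith
  · exact ⟨x, mem_ball_self hρ, hx⟩
  · exact (convex_ball x ρ).isPreconnected

lemma Ctx.infDist_le {n : ℕ} {c C R : ℝ} {U : Set (En n)} {ξ : En n} {u : En n → ℝ}
    (h : Ctx c C U ξ R u) (x : En n) : infDist x (frontier U) ≤ dist x ξ :=
  infDist_le_dist_of_mem h.hξ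

lemma Ctx.harnack_pt {n : ℕ} {c C R : ℝ} {U : Set (En n)} {ξ : En n} {u : En n → ℝ}
    (h : Ctx c C U ξ R u) {x y : En n} {a : ℝ} (ha : 0 < a) (hx : x ∈ U) (hxR : dist x ξ ≤ R / 2)
    (hax : a ≤ infDist x (frontier U)) (hy : dist y x ≤ a / 4) : u y ≤ 4 * 3 ^ n * u x := by
  have h1 := h.infDist_le x
  have hsub : ball x a ⊆ U ∩ ball ξ R := by
    intro z hz
    refine ⟨ball_subset_of_infDist h.hU.1 ha hx hax hz, ?_⟩
    rw [mem_ball] at hz ⊢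
    have := dist_triangle z x ξ
    linarith
  exact harnack_ball ha (h.hharm.1.mono hsub) (fun z hz => h.hpos z (hsub hz))
    (fun z hz => h.hharm.2 z (hsub hz)) hy

lemma Ctx.mem {n : ℕ} {c C R : ℝ} {U : Set (En n)} {ξ : En n} {u : En n → ℝ}
    (_ : Ctx c C U ξ R u) (hR : 0 < R) {x : En n} (hx : x ∈ U) (hxR : dist x ξ ≤ R / 2) :
    x ∈ U ∩ ball ξ R := ⟨hx, by rw [mem_ball]; linarith⟩

lemma one_le_harn (n : ℕ) : (1:ℝ) ≤ 4 * 3 ^ n := by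
  have : (1:ℝ) ≤ 3 ^ n := one_le_pow₀ (by norm_num)
  linarith

lemma hit {n : ℕ} {γ : ℝ → En n} {t₀ : ℝ} (h0 : t₀ ∈ Icc (0:ℝ) 1) (hγ : ContinuousOn γ (Icc 0 1))
    {x : En n} (hx : γ t₀ = x) {t₁ : ℝ} (h1 : t₁ ∈ Icc t₀ 1) {d : ℝ} (hd0 : 0 ≤ d)
    (hd : d ≤ dist x (γ t₁)) :
    ∃ t ∈ Icc t₀ 1, dist x (γ t) = d := by
  have hc : ContinuousOn (fun t => dist x (γ t)) (Icc t₀ t₁) :=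
    (Continuous.dist continuous_const continuous_id).comp_continuousOn
      (hγ.mono (Icc_subset_Icc h0.1 h1.2))
  have := intermediate_value_Icc h1.1 hc
  obtain ⟨t, ht, hE⟩ := this ⟨by simpa [hx] using hd0, hd⟩
  exact ⟨t, ⟨ht.1, ht.2.trans h1.2⟩, hE⟩

lemma Ctx.chain {n : ℕ} {c C R : ℝ} {U : Set (En n)} {ξ : En n} {u : En n → ℝ}
    (h : Ctx c C U ξ R u) (hR : 0 < R) {γ : ℝ → En n} (hγ : ContinuousOn γ (Icc 0 1)) {a : ℝ} (ha : 0 < a)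
    (hγU : ∀ t ∈ Icc (0:ℝ) 1, γ t ∈ U ∧ dist (γ t) ξ ≤ R / 2 ∧ a ≤ infDist (γ t) (frontier U))
    (N : ℕ) : ∀ t₀ ∈ Icc (0:ℝ) 1, eVariationOn γ (Icc t₀ 1) < N * ENNReal.ofReal (a / 4) →
      u (γ t₀) ≤ (4 * 3 ^ n) ^ N * u (γ 1) := by
  have hH := one_le_harn n
  have hm1 : (1:ℝ) ∈ Icc (0:ℝ) 1 := by simp
  have hp1 : 0 < u (γ 1) := h.hpos _ (h.mem hR (hγU 1 hm1).1 (hγU 1 hm1).2.1)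
  induction N with
  | zero => intro t₀ _ hv; simp at hv
  | succ N ih =>
    intro t₀ ht₀ hv
    by_cases hcase : ∃ t₁ ∈ Icc t₀ 1, a / 4 ≤ dist (γ t₀) (γ t₁)
    · obtain ⟨t₁, ht₁, hd⟩ := hcase
      obtain ⟨t, ht, hE⟩ := hit ht₀ hγ rfl ht₁ (by positivity) hd
      have ht' : t ∈ Icc (0:ℝ) 1 := ⟨ht₀.1.trans ht.1, ht.2⟩
      have h1 := h.harnack_pt ha (hγU t ht').1 (hγU t ht').2.1 (hγU t ht').2.2 (y := γ t₀) hE.le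
      have hadd := eVariationOn.Icc_add_Icc γ (s := univ) ht.1 ht.2 (mem_univ t)
      simp only [univ_inter] at hadd
      have he : ENNReal.ofReal (a / 4) ≤ eVariationOn γ (Icc t₀ t) := by
        rw [← hE, ← edist_dist]
        exact eVariationOn.edist_le γ (left_mem_Icc.2 ht.1) (right_mem_Icc.2 ht.1)
      have hlt : eVariationOn γ (Icc t 1) < N * ENNReal.ofReal (a / 4) := by
        have : ENNReal.ofReal (a / 4) + eVariationOn γ (Icc t 1) <
            ENNReal.ofReal (a / 4) + N * ENNReal.ofReal (a / 4) := by
          calc _ ≤ eVariationOn γ (Icc t₀ t) + eVariationOn γ (Icc t 1) := by gcongr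
            _ < _ := by
              rw [hadd]
              refine hv.trans_eq ?_
              push_cast; ring
        exact (ENNReal.add_lt_add_iff_left ENNReal.ofReal_ne_top).1 this
      have h2 := ih t ht' hlt
      calc u (γ t₀) ≤ 4 * 3 ^ n * u (γ t) := h1
        _ ≤ 4 * 3 ^ n * ((4 * 3 ^ n) ^ N * u (γ 1)) := by gcongr
        _ = _ := by ring
    · push Not at hcase
      have hd := hcase 1 ⟨ht₀.2, le_refl _⟩
      have h1 := h.harnack_pt ha (hγU 1 hm1).1 (hγU 1 hm1).2.1 (hγU 1 hm1).2.2 (y := γ t₀) hd.le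
      refine h1.trans ?_
      gcongr
      exact le_self_pow₀ hH (by omega)

lemma dist_le_of_curve {n : ℕ} {γ : ℝ → En n} {x : En n} {L : ℝ} (hL : 0 ≤ L) (h0 : γ 0 = x)
    (hl : curveLength γ ≤ ENNReal.ofReal L) {t : ℝ} (ht : t ∈ Icc (0:ℝ) 1) : dist x (γ t) ≤ L := by
  have := (eVariationOn.edist_le γ (left_mem_Icc.2 (zero_le_one (α := ℝ))) ht).trans hl
  rw [h0, edist_dist] at this
  exact (ENNReal.ofReal_le_ofReal_iff hL).1 this

theorem harnack_pair (n : ℕ) (c C Λ : ℝ) (hc : 0 < c) : ∃ H : ℝ, 1 ≤ H ∧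
    ∀ (U : Set (En n)) (ξ : En n) (R : ℝ) (u : En n → ℝ), Ctx c C U ξ R u → 0 < R →
    ∀ (p q : En n) (a : ℝ), p ∈ U → q ∈ U → 0 < a → a ≤ infDist p (frontier U) →
      a ≤ infDist q (frontier U) → dist p q ≤ Λ * a → dist p ξ + C * dist p q ≤ R / 2 →
      u p ≤ H * u q := by
  obtain ⟨N, hN⟩ := exists_nat_gt (8 * (C * Λ) / c)
  refine ⟨(4 * 3 ^ n) ^ N, one_le_pow₀ (one_le_harn n), ?_⟩
  intro U ξ R u h hR p q a hp hq ha hap haq hpq hin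
  obtain ⟨γ, ⟨hγc, hγU, hγ0, hγ1⟩, hlen, hcig⟩ := h.hU.2.2 p hp q hq
  have hC := h.hC
  have hc1 := h.hc1
  have hL : 0 ≤ C * dist p q := mul_nonneg (by linarith) dist_nonneg
  have hmain := h.chain hR hγc (a := c * a / 2) (by positivity) (fun t ht => by
    refine ⟨hγU ht, ?_, ?_⟩
    · have h1 := dist_le_of_curve hL hγ0 hlen ht
      have := dist_triangle (γ t) p ξ
      rw [dist_comm (γ t) p] at this
      linarith
    · by_cases h1 : dist p (γ t) < a / 2
      · have := infDist_le_infDist_add_dist (s := frontier U) (x := p) (y := γ t)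
        nlinarith
      by_cases h2 : dist (γ t) q < a / 2
      · have := infDist_le_infDist_add_dist (s := frontier U) (x := q) (y := γ t)
        rw [dist_comm] at this
        nlinarith
      push Not at h1 h2
      refine le_trans ?_ (hcig t ht)
      have := le_min h1 h2
      nlinarith) N 0 (by simp) (by
    refine lt_of_le_of_lt hlen ?_
    rw [← ENNReal.ofReal_natCast, ← ENNReal.ofReal_mul (by positivity)]
    have h3 : 8 * (C * Λ) < N * c := by rwa [div_lt_iff₀ hc] at hN
    have h4 : C * dist p q ≤ C * (Λ * a) := by gcongr
    have h5 : C * dist p q < N * (c * a / 2 / 4) := by nlinarith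
    exact (ENNReal.ofReal_lt_ofReal_iff (lt_of_le_of_lt hL h5)).2 h5)
  rwa [hγ0, hγ1] at hmain

set_option maxHeartbeats 1600000 in
theorem decay (n : ℕ) (c C : ℝ) (hc : 0 < c) : ∃ l : ℕ, 1 ≤ l ∧
    ∀ (U : Set (En n)) (ξ : En n) (r : ℝ) (u : En n → ℝ), Ctx c C U ξ ((10 + 12 * C) * r) u → 0 < r →
    ∀ xr ∈ U, dist xr ξ ≤ r → c * r / 8 ≤ infDist xr (frontier U) →
    ∀ x ∈ U, dist x ξ ≤ 3 * r → ∀ k : ℕ, (1 / 2) ^ k * r ≤ infDist x (frontier U) →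
      u x ≤ (2 ^ l) ^ (k + 2) * u xr := by
  obtain ⟨H, hH1, hH⟩ := harnack_pair n c C (192 / c ^ 2) hc
  obtain ⟨l, hl⟩ := pow_unbounded_of_one_lt H (one_lt_two (α := ℝ))
  refine ⟨l + 1, by omega, ?_⟩
  intro U ξ r u h hr xr hxrU hxrξ hxrd x hxU hxξ k hk
  have hC := h.hC
  have hc1 := h.hc1
  set R := (10 + 12 * C) * r with hRdef
  have hR : 0 < R := by positivity
  have hCr : 0 < C * r := by positivity
  have hu0 : 0 < u xr := h.hpos _ (h.mem hR hxrU (by nlinarith))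
  have hl2 : H ≤ 2 ^ (l + 1) := hl.le.trans (pow_le_pow_right₀ (by norm_num) (by omega))
  suffices hs : u x ≤ H ^ (k + 2) * u xr by
    refine hs.trans ?_
    gcongr
  set D := dist x xr with hD
  have hD4 : D ≤ 4 * r := by
    have := dist_triangle_right x xr ξ
    linarith
  have hcc : 0 < c ^ 2 := by positivity
  have hcc1 : c ^ 2 ≤ c := by nlinarith
  have hΛ : 192 / c ^ 2 * c ^ 2 = 192 := by field_simp
  by_cases hDs : D < c * r / 16
  · have h1 : u x ≤ H * u xr := by
      refine hH U ξ R u h hR x xr (c * r / 16) hxU hxrU (by positivity) ?_ (by nlinarith) ?_ ?_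
      · have := infDist_le_infDist_add_dist (s := frontier U) (x := xr) (y := x)
        rw [dist_comm] at this
        linarith
      · have : 1 ≤ 192 / c ^ 2 := by rw [le_div_iff₀ hcc]; nlinarith
        have h3 : 0 < c * r / 16 := by positivity
        nlinarith
      · have : C * dist x xr ≤ C * (4 * r) := by gcongr
        nlinarith
    refine h1.trans ?_
    gcongr
    exact le_self_pow₀ hH1 (by omega)
  push Not at hDs
  have hD0 : 0 < D := lt_of_lt_of_le (by positivity) hDs
  obtain ⟨γ, ⟨hγc, hγU, hγ0, hγ1⟩, -, hcig⟩ := h.hU.2.2 x hxU xr hxrU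
  have hhalf : ∀ j : ℕ, (0:ℝ) < (1/2) ^ j ∧ ((1/2:ℝ)) ^ j ≤ 1 := fun j =>
    ⟨by positivity, pow_le_one₀ (by norm_num) (by norm_num)⟩
  have hfind : ∀ j : ℕ, ∃ t ∈ Icc (0:ℝ) 1, dist x (γ t) = (1/2) ^ j * (D / 2) := by
    intro j
    refine hit (by simp) hγc hγ0 (t₁ := 1) (by simp) (by positivity) ?_
    rw [hγ1, ← hD]
    nlinarith [hhalf j]
  have hdepth : ∀ j : ℕ, ∀ t ∈ Icc (0:ℝ) 1, dist x (γ t) = (1/2) ^ j * (D / 2) →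
      c * ((1/2) ^ j * (D / 2)) ≤ infDist (γ t) (frontier U) ∧ dist (γ t) ξ ≤ 5 * r ∧
        dist x (γ t) ≤ 2 * r := by
    intro j t ht hE
    have h1 : (1/2) ^ j * (D / 2) ≤ D / 2 := by nlinarith [hhalf j]
    have h2 : D / 2 ≤ dist (γ t) xr := by
      have := dist_triangle x (γ t) xr
      linarith
    refine ⟨(mul_le_mul_of_nonneg_left (le_min hE.ge (h1.trans h2)) hc.le).trans (hcig t ht), ?_, ?_⟩
    · have := dist_triangle (γ t) x ξ
      rw [dist_comm (γ t) x] at this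
      linarith
    · linarith
  have hj : ∀ j : ℕ, ∀ t ∈ Icc (0:ℝ) 1, dist x (γ t) = (1/2) ^ j * (D / 2) →
      u (γ t) ≤ H ^ (j + 1) * u xr := by
    intro j
    induction j with
    | zero =>
      intro t ht hE
      obtain ⟨h1, h2, h3⟩ := hdepth 0 t ht hE
      have h4 : dist (γ t) xr ≤ 6 * r := by
        have := dist_triangle_left (γ t) xr x
        linarith
      rw [zero_add, pow_one]
      refine hH U ξ R u h hR (γ t) xr (c ^ 2 * r / 32) (hγU ht) hxrU (by positivity) ?_ ?_ ?_ ?_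
      · refine le_trans ?_ h1
        rw [pow_zero, one_mul]
        nlinarith
      · refine le_trans ?_ hxrd
        nlinarith
      · have : 192 / c ^ 2 * (c ^ 2 * r / 32) = 6 * r := by field_simp; norm_num
        linarith
      · have : C * dist (γ t) xr ≤ C * (6 * r) := by gcongr
        nlinarith
    | succ j ih =>
      intro t ht hE
      obtain ⟨t', ht', hE'⟩ := hfind j
      have hi := ih t' ht' hE'
      obtain ⟨h1, h2, h3⟩ := hdepth (j + 1) t ht hE
      obtain ⟨h1', h2', h3'⟩ := hdepth j t' ht' hE'
      have hb := (hhalf j).1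
      have hps : ((1:ℝ)/2) ^ (j + 1) = (1/2) ^ j / 2 := by rw [pow_succ]; ring
      have hdd : dist (γ t) (γ t') ≤ dist x (γ t) + dist x (γ t') := dist_triangle_left _ _ _
      have hst : u (γ t) ≤ H * u (γ t') := by
        refine hH U ξ R u h hR (γ t) (γ t') (c * ((1/2) ^ (j + 1) * (D / 2))) (hγU ht) (hγU ht')
          (by positivity) h1 ?_ ?_ ?_
        · refine le_trans ?_ h1'
          gcongr c * (?_ * _)
          rw [hps]; linarith
        · have hq : 4 ≤ 192 / c ^ 2 * c := by
            rw [div_mul_eq_mul_div, le_div_iff₀ hcc]; nlinarith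
          have hbD : 0 < (1/2:ℝ) ^ j * D := by positivity
          calc dist (γ t) (γ t') ≤ dist x (γ t) + dist x (γ t') := hdd
            _ ≤ 4 * ((1/2) ^ (j + 1) * (D / 2)) := by rw [hE, hE', hps]; nlinarith
            _ ≤ (192 / c ^ 2 * c) * ((1/2) ^ (j + 1) * (D / 2)) := by gcongr
            _ = _ := by ring
        · have : C * dist (γ t) (γ t') ≤ C * (4 * r) := by gcongr; linarith
          nlinarith
      calc u (γ t) ≤ H * u (γ t') := hst
        _ ≤ H * (H ^ (j + 1) * u xr) := by gcongr
        _ = _ := by ring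
  obtain ⟨t, ht, hE⟩ := hfind k
  have hkk := hj k t ht hE
  obtain ⟨h1, h2, h3⟩ := hdepth k t ht hE
  have hb := (hhalf k).1
  have hst : u x ≤ H * u (γ t) := by
    refine hH U ξ R u h hR x (γ t) ((1/2) ^ k * (c ^ 2 * r / 32)) hxU (hγU ht)
          (by positivity) ?_ ?_ ?_ ?_
    · refine le_trans ?_ hk
      gcongr
      nlinarith
    · refine le_trans ?_ h1
      rw [mul_left_comm]
      gcongr
      nlinarith
    · rw [hE]
      calc (1/2) ^ k * (D / 2) ≤ (1/2) ^ k * (6 * r) := by gcongr; linarith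
        _ = (1/2) ^ k * (192 / c ^ 2 * (c ^ 2 * r / 32)) := by congr 1; field_simp; norm_num
        _ = _ := by ring
    · have : C * dist x (γ t) ≤ C * (2 * r) := by gcongr
      nlinarith
  calc u x ≤ H * u (γ t) := hst
    _ ≤ H * (H ^ (k + 1) * u xr) := by gcongr
    _ = _ := by ring

lemma decay_real {l : ℕ} {a b r t δ : ℝ} (hb : 0 < b) (hr : 0 < r) (ht : 0 < t) (htr : t ≤ r)
    (hδ : t ≤ δ) (h : ∀ k : ℕ, (1 / 2) ^ k * r ≤ δ → a ≤ (2 ^ l) ^ (k + 2) * b) :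
    a ≤ (8 * r / t) ^ l * b := by
  obtain ⟨k, hk1, hk2⟩ := exists_nat_pow_near_of_lt_one (x := t / r) (y := 1/2) (by positivity)
    ((div_le_one hr).2 htr) (by norm_num) (by norm_num)
  rw [lt_div_iff₀ hr] at hk1
  rw [div_le_iff₀ hr] at hk2
  refine (h (k + 1) (by linarith)).trans ?_
  rw [← pow_mul, mul_comm l, pow_mul]
  gcongr
  rw [le_div_iff₀ ht]
  have : (2:ℝ) ^ k * (1/2) ^ k = 1 := by rw [← mul_pow]; norm_num
  calc (2:ℝ) ^ (k + 1 + 2) * t ≤ 2 ^ (k + 1 + 2) * ((1/2) ^ k * r) := by gcongr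
    _ = 8 * (2 ^ k * (1/2) ^ k) * r := by ring
    _ = _ := by rw [this]; ring

set_option maxHeartbeats 1600000 in
/-- Boundary estimate: a positive harmonic function vanishing on the boundary of a
`(c_u,C_u)`-uniform domain is controlled, on `U ∩ B(ξ,r)`, by its value at any
interior point `x_r` with `|x_r − ξ| ≤ r` and `dist(x_r,∂U) ≥ c_u r/8`. -/
theorem statement1 (n : ℕ) (hn : 1 ≤ n) (cu Cu : ℝ)
    (hcu : cu ∈ Set.Ioo (0:ℝ) 1) (hCu : 1 < Cu) :
    ∃ K₀ : ℝ, 1 < K₀ ∧ ∃ K₁ : ℝ, 1 < K₁ ∧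
      ∀ U : Set (En n), U ≠ Set.univ → IsUniformDomain cu Cu U →
      ∀ ξ ∈ frontier U, ∀ r : ℝ, 0 < r →
        ENNReal.ofReal (K₀ * r) < EMetric.diam U →
        ∀ u : En n → ℝ,
          (∀ z ∈ U ∩ Metric.ball ξ (K₀ * r), 0 < u z) →
          IsHarmonicOn u (U ∩ Metric.ball ξ (K₀ * r)) →
          ContinuousOn u (closure (U ∩ Metric.ball ξ (K₀ * r))) →
          (∀ z ∈ frontier U ∩ Metric.ball ξ (K₀ * r), u z = 0) →
          ∀ xr ∈ U, dist xr ξ ≤ r → cu * r / 8 ≤ Metric.infDist xr (frontier U) →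
          ∀ y ∈ U ∩ Metric.ball ξ r, u y ≤ K₁ * u xr := by
  obtain ⟨hc, hc1⟩ := hcu
  obtain ⟨l, hl1, hdecay⟩ := decay n cu Cu hc
  obtain ⟨θ, hθ0, hθ1, hgrowth⟩ := growth n hn (cu / 8) (by positivity)
  have hl1' : (1:ℝ) ≤ l := by exact_mod_cast hl1
  obtain ⟨ε, hε0, hεc, hεθ⟩ : ∃ ε : ℝ, 0 < ε ∧ ε ≤ cu / 16 ∧ ε * l ≤ θ / 2 := by
    refine ⟨min (cu / 16) (θ / (2 * l)), by positivity, min_le_left _ _, ?_⟩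
    calc min (cu / 16) (θ / (2 * l)) * l ≤ θ / (2 * l) * l := by gcongr; exact min_le_right _ _
      _ = θ / 2 := by field_simp
  have hbern : 1 - θ ≤ (1 - θ / 2) * (1 - ε) ^ l := by
    have h1 : 1 + (l:ℝ) * (-ε) ≤ (1 + (-ε)) ^ l := one_add_mul_le_pow (by linarith) l
    rw [← sub_eq_add_neg] at h1
    nlinarith
  have hbase : 1 < 64 / (cu * ε) := by
    rw [lt_div_iff₀ (by positivity)]; nlinarith
  refine ⟨10 + 12 * Cu, by linarith, 2 * (64 / (cu * ε)) ^ l, ?_, ?_⟩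
  · have := one_le_pow₀ (n := l) hbase.le
    linarith
  intro U _ hU ξ hξ r hr _ u hpos hharm hcont hbd xr hxrU hxrξ hxrd y hy
  set R := (10 + 12 * Cu) * r with hRdef
  have hR22 : 22 * r < R := by nlinarith
  have hctx : Ctx cu Cu U ξ R u := ⟨hc, hc1, hCu, hU, hξ, hpos, hharm⟩
  have hB : 0 < u xr := hpos xr ⟨hxrU, by rw [mem_ball]; linarith⟩
  have hUo := hU.1
  have hWo : IsOpen (U ∩ ball ξ R) := hUo.inter isOpen_ball
  have hd : ∀ x ∈ U, dist x ξ ≤ 3 * r → ∀ t : ℝ, 0 < t → t ≤ r → t ≤ infDist x (frontier U) →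
      u x ≤ (8 * r / t) ^ l * u xr := by
    intro x hx hxξ t ht htr hxt
    exact decay_real hB hr ht htr hxt
      (fun k hk => hdecay U ξ r u hctx hr xr hxrU hxrξ hxrd x hx hxξ k hk)
  have hcontS : ∀ ρ, ρ < R → ContinuousOn u (closure U ∩ closedBall ξ ρ) := by
    intro ρ hρ
    refine hcont.mono ?_
    intro q hq
    exact isOpen_ball.closure_inter ⟨hq.1, lt_of_le_of_lt hq.2 hρ⟩
  -- maximise a weighted function
  set K : Set (En n) := closure U ∩ closedBall ξ (2 * r) with hK
  have hKc : IsCompact K := (isCompact_closedBall ξ (2 * r)).inter_left isClosed_closure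
  set w : En n → ℝ := fun x => u x * (2 * r - dist x ξ) ^ l with hw
  have hwc : ContinuousOn w K := by
    refine (hcontS (2 * r) (by linarith)).mul ?_
    apply Continuous.continuousOn
    fun_prop
  have hyξ : dist y ξ < r := hy.2
  have hyK : y ∈ K := ⟨subset_closure hy.1, by rw [mem_closedBall]; linarith⟩
  have huy : 0 < u y := hpos y ⟨hy.1, by rw [mem_ball]; linarith⟩
  obtain ⟨x, hxK, hxmax⟩ := hKc.exists_isMaxOn ⟨y, hyK⟩ hwc
  have hyx : w y ≤ w x := hxmax hyK
  have hwy : u y * r ^ l ≤ w y := by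
    simp only [hw]
    gcongr
    linarith
  have hwx0 : 0 < w x := lt_of_lt_of_le (by positivity) (hwy.trans hyx)
  have hxξ : dist x ξ ≤ 2 * r := hxK.2
  set d := 2 * r - dist x ξ with hddef
  have hd0 : 0 < d := by
    rcases (sub_nonneg.2 hxξ).eq_or_lt with h | h
    · exfalso
      have : w x = 0 := by
        simp only [hw]
        rw [← h, zero_pow (by omega), mul_zero]
      linarith
    · exact h
  have hxU : x ∈ U := by
    by_contra hcon
    have : u x = 0 := hbd x ⟨⟨hxK.1, by rwa [hUo.interior_eq]⟩, by rw [mem_ball]; linarith⟩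
    have : w x = 0 := by simp only [hw, this, zero_mul]
    linarith
  have hux : 0 < u x := hpos x ⟨hxU, by rw [mem_ball]; linarith⟩
  have hd2 : d ≤ 2 * r := by have := dist_nonneg (x := x) (y := ξ); linarith
  set s := ε * d with hs
  have hs0 : 0 < s := by positivity
  have hsr : s ≤ cu * r / 8 := by nlinarith
  have hsr' : s ≤ r / 8 := by nlinarith
  have hsd : s ≤ d := by nlinarith
  -- a deep point near `x`
  obtain ⟨z, hzU, hxz, hzd⟩ : ∃ z ∈ U, dist x z ≤ s / 4 ∧ cu * (s / 4) ≤ infDist z (frontier U) := by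
    by_cases hcase : dist x xr < s / 2
    · refine ⟨x, hxU, by simp; positivity, ?_⟩
      have := infDist_le_infDist_add_dist (s := frontier U) (x := xr) (y := x)
      rw [dist_comm] at this
      nlinarith
    · push Not at hcase
      obtain ⟨γ, ⟨hγc, hγU, hγ0, hγ1⟩, -, hcig⟩ := hU.2.2 x hxU xr hxrU
      obtain ⟨t, ht, hE⟩ := hit (t₀ := 0) (by simp) hγc hγ0 (t₁ := 1) (by simp) (d := s / 4)
        (by positivity) (by rw [hγ1]; linarith)
      refine ⟨γ t, hγU ht, hE.le, ?_⟩
      refine le_trans ?_ (hcig t ht)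
      gcongr
      refine le_min hE.ge ?_
      have := dist_triangle x (γ t) xr
      linarith
  have hball : ∀ q, dist q z ≤ s / 2 → dist q x ≤ s ∧ dist q ξ ≤ 3 * r := by
    intro q hq
    have h1 := dist_triangle_right q x z
    have h2 := dist_triangle q x ξ
    constructor <;> linarith
  set m : ℝ := (64 / (cu * ε) * (r / d)) ^ l * u xr with hm
  have hm0 : 0 < m := by positivity
  set M : ℝ := u x / (1 - ε) ^ l with hM
  have hε1 : 0 < 1 - ε := by linarith
  have hpε : 0 < (1 - ε) ^ l := by positivity
  have hpε1 : (1 - ε) ^ l ≤ 1 := pow_le_one₀ hε1.le (by linarith)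
  have hMx : u x ≤ M := by rw [hM, le_div_iff₀ hpε]; nlinarith
  have hux2 : u x ≤ 2 * m := by
    rcases lt_or_ge M m with hMm | hmM
    · linarith
    have hg := hgrowth U u x z s m M hUo hs0 hm0.le hmM hxU hxz
      ((hcontS (3 * r) (by linarith)).mono (fun q hq => ⟨hq.1, (hball q hq.2).2⟩))
      (fun q hq => by
        have hq' : q ∈ U ∩ ball ξ R := ⟨hq.1, by
          rw [mem_ball]; have := (hball q (le_of_lt hq.2)).2; linarith⟩
        exact ⟨(hharm.1 q hq').contDiffAt (hWo.mem_nhds hq'), hharm.2 q hq'⟩)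
      (fun q hq => hbd q ⟨hq.1, by rw [mem_ball]; have := (hball q hq.2).2; linarith⟩)
      (fun q hq => by
        have hqs := (hball q hq.2).1
        have hq3 : dist q ξ ≤ dist x ξ + s := by
          have := dist_triangle q x ξ
          linarith
        have hqd : d * (1 - ε) ≤ 2 * r - dist q ξ := by
          have : d * (1 - ε) = d - s := by rw [hs]; ring
          linarith
        have hqK : q ∈ K := ⟨subset_closure hq.1, by rw [mem_closedBall]; linarith⟩
        have huq : 0 < u q := hpos q ⟨hq.1, by rw [mem_ball]; linarith⟩
        have h1 : w q ≤ w x := hxmax hqK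
        have h2 : u q * (d * (1 - ε)) ^ l ≤ w q := by
          simp only [hw]
          gcongr
        have h3 : u q * (d * (1 - ε)) ^ l ≤ u x * d ^ l := h2.trans h1
        rw [mul_pow] at h3
        have hdl : 0 < d ^ l := by positivity
        rw [hM, le_div_iff₀ hpε]
        refine le_of_mul_le_mul_right ?_ hdl
        linarith)
      (fun q hq => by
        have hqz : dist q z ≤ cu / 8 * s := hq.2
        have hb := hball q (by nlinarith)
        have h1 := hd q hq.1 hb.2 (cu / 8 * s) (by positivity) (by nlinarith) (by
          have := infDist_le_infDist_add_dist (s := frontier U) (x := z) (y := q)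
          rw [dist_comm] at this
          linarith)
        have h2 : 8 * r / (cu / 8 * s) = 64 / (cu * ε) * (r / d) := by
          rw [hs]; field_simp; norm_num
        rwa [h2] at h1)
    have h4 : (1 - θ) * M ≤ (1 - θ / 2) * u x := by
      rw [hM, mul_div_assoc', div_le_iff₀ hpε]
      nlinarith
    nlinarith
  have hfin : w x ≤ 2 * (64 / (cu * ε)) ^ l * u xr * r ^ l := by
    calc w x = u x * d ^ l := rfl
      _ ≤ 2 * m * d ^ l := by gcongr
      _ = 2 * (64 / (cu * ε)) ^ l * u xr * (r / d * d) ^ l := by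
        rw [hm, mul_pow, mul_pow]; ring
      _ = _ := by rw [div_mul_cancel₀ r hd0.ne']
  exact le_of_mul_le_mul_right ((hwy.trans hyx).trans hfin) (by positivity)
end
end

section
/- Let n ≥ 1, c_u ∈ (0,1), C_u ∈ (1,∞), and let U ⊊ ℝⁿ be an unbounded (c_u,C_u)-uniform domain with nonempty boundary. Let h : closure(U) → ℝ be continuous, positive and harmonic on U, and identically 0 on ∂U. Then there exists a constant A₁ ∈ (1,∞), depending only on n, c_u and C_u, such that for every x ∈ U, every r > 0, every point x_r ∈ U with d_U(x,x_r) ≤ r/4 and dist(x_r, ∂U) ≥ c_u·r/8, and every y ∈ U with d_U(x,y) < r, one has h(y) ≤ A₁·h(x_r). -/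
open Set Metric MeasureTheory ENNReal

noncomputable section

section Helpers

open Filter Topology

lemma hasDerivAt_posPart_pow (k : ℕ) (hk : 1 ≤ k) (t : ℝ) :
    HasDerivAt (fun t : ℝ => (max t 0) ^ (k+1)) ((k+1 : ℝ) * (max t 0) ^ k) t := by
  rcases lt_trichotomy t 0 with ht | ht | ht
  · have h1 : (fun t : ℝ => (max t 0) ^ (k+1)) =ᶠ[𝓝 t] fun _ => 0 := by
      filter_upwards [Iio_mem_nhds ht] with s hs
      rw [max_eq_right (le_of_lt hs)]; simp
    rw [max_eq_right ht.le, zero_pow (by omega), mul_zero]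
    exact (hasDerivAt_const t (0:ℝ)).congr_of_eventuallyEq h1
  · subst ht
    rw [max_self, zero_pow (by omega), mul_zero]
    rw [hasDerivAt_iff_isLittleO]
    simp only [max_self, sub_zero, smul_zero]
    rw [zero_pow (by omega)]
    simp only [sub_zero]
    have h2 : (fun t : ℝ => (max t 0) ^ (k+1)) =O[𝓝 0] fun t : ℝ => t ^ (k+1) := by
      refine Asymptotics.IsBigO.of_bound 1 (Eventually.of_forall fun s => ?_)
      rw [one_mul, norm_pow, norm_pow]
      gcongr
      rw [Real.norm_eq_abs, Real.norm_eq_abs, abs_of_nonneg (le_max_right _ _)]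
      exact max_le (le_abs_self _) (abs_nonneg _)
    refine h2.trans_isLittleO ?_
    exact Asymptotics.isLittleO_pow_id (by omega)
  · have h1 : (fun t : ℝ => (max t 0) ^ (k+1)) =ᶠ[𝓝 t] fun s => s ^ (k+1) := by
      filter_upwards [Ioi_mem_nhds ht] with s hs
      rw [max_eq_left (le_of_lt hs)]
    rw [max_eq_left ht.le]
    have := (hasDerivAt_pow (k+1) t).congr_of_eventuallyEq h1
    simpa using this

def F3 (t : ℝ) : ℝ := (max t 0) ^ 3

lemma F3_hasDerivAt (t : ℝ) : HasDerivAt F3 (3 * (max t 0) ^ 2) t := by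
  have := hasDerivAt_posPart_pow 2 (by norm_num) t
  norm_num at this
  exact this

lemma F3_hasDerivAt2 (t : ℝ) : HasDerivAt (fun t : ℝ => 3 * (max t 0) ^ 2) (6 * (max t 0)) t := by
  have h := (hasDerivAt_posPart_pow 1 (by norm_num) t).const_mul 3
  have h2 : HasDerivAt (fun t : ℝ => 3 * (max t 0) ^ 2) _ t := h
  exact h2.congr_deriv (by push_cast; ring)

lemma F3_deriv : deriv F3 = fun t : ℝ => 3 * (max t 0) ^ 2 :=
  funext fun t => (F3_hasDerivAt t).deriv

lemma F3_contDiff : ContDiff ℝ 2 F3 := by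
  have h1 : ContDiff ℝ 1 (fun t : ℝ => 3 * (max t 0) ^ 2) := by
    rw [contDiff_one_iff_deriv]
    refine ⟨fun t => (F3_hasDerivAt2 t).differentiableAt, ?_⟩
    rw [show deriv (fun t : ℝ => 3 * (max t 0) ^ 2) = fun t => 6 * max t 0 from
      funext fun t => (F3_hasDerivAt2 t).deriv]
    fun_prop
  rw [show (2 : WithTop ℕ∞) = 1 + 1 by norm_num, contDiff_succ_iff_deriv]
  refine ⟨fun t => (F3_hasDerivAt t).differentiableAt, by simp, ?_⟩
  rw [F3_deriv]; exact h1

variable {n : ℕ}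

def Phi (y : En n) : ℝ := F3 (1 - ‖y‖ ^ 2)
def Psi (y : En n) : ℝ := 6 * (max (1 - ‖y‖ ^ 2) 0) ^ 2

lemma Phi_contDiff : ContDiff ℝ 2 (Phi : En n → ℝ) := by
  unfold Phi
  exact F3_contDiff.comp (contDiff_const.sub (contDiff_norm_sq ℝ))

lemma Phi_nonneg (y : En n) : 0 ≤ Phi y := by unfold Phi F3; positivity
lemma Psi_nonneg (y : En n) : 0 ≤ Psi y := by unfold Psi; positivity

lemma Phi_zero (y : En n) (hy : 1 ≤ ‖y‖) : Phi y = 0 := by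
  unfold Phi F3
  rw [max_eq_right (by nlinarith)]; norm_num
lemma Psi_zero (y : En n) (hy : 1 ≤ ‖y‖) : Psi y = 0 := by
  unfold Psi
  rw [max_eq_right (by nlinarith)]; norm_num
lemma Psi_le (y : En n) : Psi y ≤ 6 := by
  unfold Psi
  have h1 : max (1 - ‖y‖ ^ 2) 0 ≤ 1 := max_le (by nlinarith [sq_nonneg ‖y‖]) (by norm_num)
  have h2 : 0 ≤ max (1 - ‖y‖ ^ 2) 0 := le_max_right _ _
  nlinarith
lemma Psi_ge (y : En n) (hy : ‖y‖ ≤ 1/2) : 1 ≤ Psi y := by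
  unfold Psi
  have h1 : 3/4 ≤ max (1 - ‖y‖ ^ 2) 0 := le_max_of_le_left (by nlinarith [norm_nonneg y])
  nlinarith

lemma Psi_cont : Continuous (Psi : En n → ℝ) := by unfold Psi; fun_prop
lemma Psi_supp : HasCompactSupport (Psi : En n → ℝ) :=
  HasCompactSupport.intro (isCompact_closedBall 0 1) (fun y hy => Psi_zero y (by
    simp at hy; exact hy.le))
lemma Phi_supp : HasCompactSupport (Phi : En n → ℝ) :=
  HasCompactSupport.intro (isCompact_closedBall 0 1) (fun y hy => Phi_zero y (by
    simp at hy; exact hy.le))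

lemma Phi_fderiv (y v : En n) : fderiv ℝ Phi y v = - (Psi y * inner ℝ y v) := by
  have h1 : HasFDerivAt (fun y : En n => 1 - ‖y‖ ^ 2) (-(2 • innerSL ℝ y)) y :=
    (hasStrictFDerivAt_norm_sq y).hasFDerivAt.const_sub 1
  have h2 := (F3_hasDerivAt (1 - ‖y‖ ^ 2)).comp_hasFDerivAt y h1
  have h3 : HasFDerivAt (Phi : En n → ℝ) _ y := h2
  rw [h3.fderiv]
  simp [Psi]
  ring

/-- Differentiation under the integral. -/
lemma mean_hasDerivAt (w : En n → ℝ) (hw : ContDiff ℝ 2 w) (x : En n) (s : ℝ) :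
    HasDerivAt (fun s : ℝ => ∫ y, w (x + s • y) * Psi y)
      (∫ y, fderiv ℝ w (x + s • y) y * Psi y) s := by
  have hdc : Continuous (fderiv ℝ w) := hw.continuous_fderiv (by norm_num)
  have hwc := hw.continuous
  have hG : Continuous (fun p : ℝ × En n => fderiv ℝ w (x + p.1 • p.2) p.2 * Psi p.2) := by
    have := (Psi_cont (n := n))
    fun_prop
  obtain ⟨C, hC⟩ := ((isCompact_closedBall s 1).prod
    (isCompact_closedBall (0 : En n) 1)).exists_bound_of_continuousOn hG.continuousOn
  have hPc := (Psi_cont (n := n))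
  refine (hasDerivAt_integral_of_dominated_loc_of_deriv_le
    (F := fun s y => w (x + s • y) * Psi y)
    (F' := fun s y => fderiv ℝ w (x + s • y) y * Psi y)
    (bound := fun y => (closedBall (0 : En n) 1).indicator (fun _ => C) y)
    (s := ball s 1) (ball_mem_nhds s one_pos) ?_ ?_ ?_ ?_ ?_ ?_).2
  · refine Eventually.of_forall fun t => Continuous.aestronglyMeasurable ?_
    fun_prop
  · refine Continuous.integrable_of_hasCompactSupport (by fun_prop) ?_
    exact Psi_supp.mul_left
  · exact Continuous.aestronglyMeasurable (by fun_prop)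
  · refine Eventually.of_forall fun y t ht => ?_
    by_cases hy : y ∈ closedBall (0 : En n) 1
    · rw [indicator_of_mem hy]
      exact hC (t, y) ⟨ball_subset_closedBall ht, hy⟩
    · rw [indicator_of_notMem hy]
      simp only [mem_closedBall, dist_zero_right, not_le] at hy
      rw [Psi_zero y hy.le]; simp
  · rw [integrable_indicator_iff measurableSet_closedBall]
    exact integrableOn_const (measure_closedBall_lt_top.ne)
  · refine Eventually.of_forall fun y t _ => ?_
    have h1 : HasDerivAt (fun t : ℝ => x + t • y) y t := by
      simpa using ((hasDerivAt_id t).smul_const y).const_add x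
    have h2 := ((hw.differentiable (by norm_num)) (x + t • y)).hasFDerivAt.comp_hasDerivAt t h1
    exact h2.mul_const _

lemma mean_deriv_nonneg (w : En n → ℝ) (hw : ContDiff ℝ 2 w) (x : En n) (s : ℝ) (hs : 0 ≤ s)
    (hl : ∀ z ∈ ball x s, 0 ≤ lap w z) :
    0 ≤ ∫ y, fderiv ℝ w (x + s • y) y * Psi y := by
  have hdc : ContDiff ℝ 1 (fderiv ℝ w) := hw.fderiv_right (by norm_num)
  have hPc := (Psi_cont (n := n))
  have hPhc := (Phi_contDiff (n := n))
  have hfi : ∀ v : En n, ContDiff ℝ 1 (fun z => fderiv ℝ w z v) := fun v =>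
    hdc.clm_apply contDiff_const
  have hg : ∀ v : En n, ContDiff ℝ 1 (fun y => fderiv ℝ w (x + s • y) v) := fun v =>
    (hfi v).comp (by fun_prop)
  have hgd : ∀ v y : En n, fderiv ℝ (fun y => fderiv ℝ w (x + s • y) v) y v
      = s * fderiv ℝ (fun z => fderiv ℝ w z v) (x + s • y) v := by
    intro v y
    have h1 : HasFDerivAt (fun y : En n => x + s • y) (s • ContinuousLinearMap.id ℝ (En n)) y := by
      simpa using ((hasFDerivAt_id y).const_smul s).const_add x
    have h2 := (((hfi v).differentiable (by norm_num)) (x + s • y)).hasFDerivAt.comp y h1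
    have h3 : HasFDerivAt (fun y => fderiv ℝ w (x + s • y) v) _ y := h2
    rw [h3.fderiv]
    simp
  have hdP : ∀ v : En n, Continuous fun y => fderiv ℝ (Phi : En n → ℝ) y v := fun v =>
    (hPhc.continuous_fderiv (by norm_num)).clm_apply continuous_const
  have hdPs : ∀ v : En n, HasCompactSupport fun y => fderiv ℝ (Phi : En n → ℝ) y v := fun v =>
    Phi_supp.fderiv_apply (𝕜 := ℝ) v
  have hgc : ∀ v : En n, Continuous (fun y => fderiv ℝ w (x + s • y) v) := fun v => (hg v).continuous
  have hgdc : ∀ v : En n, Continuous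
      (fun y => fderiv ℝ (fun y => fderiv ℝ w (x + s • y) v) y v) := fun v =>
    ((hg v).continuous_fderiv (by norm_num)).clm_apply continuous_const
  have ibp : ∀ v : En n, ∫ y, fderiv ℝ w (x + s • y) v * fderiv ℝ Phi y v
      = - ∫ y, fderiv ℝ (fun y => fderiv ℝ w (x + s • y) v) y v * Phi y := by
    intro v
    apply integral_mul_fderiv_eq_neg_fderiv_mul_of_integrable
    · exact ((hgdc v).mul hPhc.continuous).integrable_of_hasCompactSupport Phi_supp.mul_left
    · exact ((hgc v).mul (hdP v)).integrable_of_hasCompactSupport (hdPs v).mul_left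
    · exact ((hgc v).mul hPhc.continuous).integrable_of_hasCompactSupport Phi_supp.mul_left
    · exact fun y _ => (hg v).differentiable (by norm_num) y
    · exact fun y _ => hPhc.differentiable (by norm_num) y
  have key : ∀ y : En n, fderiv ℝ w (x + s • y) y * Psi y
      = - ∑ i : Fin n, fderiv ℝ w (x + s • y) (EuclideanSpace.single i 1) *
          fderiv ℝ Phi y (EuclideanSpace.single i 1) := by
    intro y
    have hy : y = ∑ i : Fin n, y i • (EuclideanSpace.single i (1:ℝ) : En n) := by
      have := (EuclideanSpace.basisFun (Fin n) ℝ).sum_repr y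
      simpa using this.symm
    conv_lhs => rw [show fderiv ℝ w (x + s • y) y = fderiv ℝ w (x + s • y)
      (∑ i : Fin n, y i • (EuclideanSpace.single i (1:ℝ) : En n)) by rw [← hy]]
    rw [map_sum, Finset.sum_mul, ← Finset.sum_neg_distrib]
    refine Finset.sum_congr rfl fun i _ => ?_
    rw [Phi_fderiv, map_smul]
    simp [EuclideanSpace.inner_single_right]
    ring
  simp_rw [key]
  rw [integral_neg, integral_finsetSum]
  · rw [Finset.sum_congr rfl (fun i _ => ibp (EuclideanSpace.single i 1)),
      Finset.sum_neg_distrib, neg_neg, ← integral_finsetSum]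
    · refine integral_nonneg fun y => ?_
      simp only [Pi.zero_apply]
      simp_rw [hgd]
      rw [← Finset.sum_mul, ← Finset.mul_sum]
      by_cases hy : ‖y‖ < 1
      · rcases hs.eq_or_lt with h0 | h0
        · rw [← h0]; simp
        refine mul_nonneg (mul_nonneg hs ?_) (Phi_nonneg y)
        refine hl (x + s • y) ?_
        rw [mem_ball, dist_eq_norm, add_sub_cancel_left, norm_smul, Real.norm_of_nonneg hs]
        nlinarith
      · rw [Phi_zero y (not_lt.1 hy)]; simp
    · intro i _
      exact ((hgdc _).mul hPhc.continuous).integrable_of_hasCompactSupport Phi_supp.mul_left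
  · intro i _
    exact ((hgc _).mul (hdP _)).integrable_of_hasCompactSupport (hdPs _).mul_left

lemma submean (w : En n → ℝ) (hw : ContDiff ℝ 2 w) (x : En n) (S : ℝ) (hS : 0 ≤ S)
    (hl : ∀ z ∈ ball x S, 0 ≤ lap w z) :
    w x * ∫ y, Psi (n := n) y ≤ ∫ y, w (x + S • y) * Psi y := by
  have hm : MonotoneOn (fun s : ℝ => ∫ y, w (x + s • y) * Psi y) (Icc 0 S) := by
    refine monotoneOn_of_deriv_nonneg (convex_Icc 0 S) ?_ ?_ ?_
    · exact fun s _ => (mean_hasDerivAt w hw x s).continuousAt.continuousWithinAt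
    · exact fun s _ => (mean_hasDerivAt w hw x s).differentiableAt.differentiableWithinAt
    · intro s hs
      rw [interior_Icc] at hs
      rw [(mean_hasDerivAt w hw x s).deriv]
      exact mean_deriv_nonneg w hw x s hs.1.le fun z hz => hl z (ball_subset_ball hs.2.le hz)
  have := hm (left_mem_Icc.2 hS) (right_mem_Icc.2 hS) hS
  simp only [zero_smul, add_zero] at this
  rwa [integral_const_mul] at this

lemma lap_congr_s2 {f g : En n → ℝ} {p : En n} (hfg : f =ᶠ[𝓝 p] g) : lap f p = lap g p := by
  unfold lap
  refine Finset.sum_congr rfl fun i _ => ?_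
  have h1 : (fun y => fderiv ℝ f y (EuclideanSpace.single i 1)) =ᶠ[𝓝 p]
      (fun y => fderiv ℝ g y (EuclideanSpace.single i 1)) := by
    filter_upwards [hfg.fderiv (𝕜 := ℝ)] with y hy
    rw [hy]
  rw [h1.fderiv_eq]

lemma lap_zero (p : En n) : lap (fun _ => (0:ℝ)) p = 0 := by
  simp [lap]

lemma lap_neg (f : En n → ℝ) (p : En n) : lap (fun z => - f z) p = - lap f p := by
  simp [lap, fderiv_fun_neg]

lemma lap_F3_comp {U : Set (En n)} (hU : IsOpen U) {h : En n → ℝ} (hh : IsHarmonicOn h U)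
    (a : ℝ) {p : En n} (hp : p ∈ U) : 0 ≤ lap (fun z => F3 (h z - a)) p := by
  have hcd : ∀ z ∈ U, ContDiffAt ℝ 2 h z := fun z hz => hh.1.contDiffAt (hU.mem_nhds hz)
  have hd : ∀ z ∈ U, DifferentiableAt ℝ h z := fun z hz => (hcd z hz).differentiableAt (by norm_num)
  have hd2 : DifferentiableAt ℝ (fderiv ℝ h) p :=
    ((hcd p hp).fderiv_right (m := 1) (by norm_num)).differentiableAt (by norm_num)
  have h1 : ∀ v : En n, (fun z => fderiv ℝ (fun z => F3 (h z - a)) z v) =ᶠ[𝓝 p]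
      fun z => (3 * (max (h z - a) 0) ^ 2) * fderiv ℝ h z v := by
    intro v
    filter_upwards [hU.mem_nhds hp] with z hz
    have := (F3_hasDerivAt (h z - a)).comp_hasFDerivAt z ((hd z hz).hasFDerivAt.sub_const a)
    have h3 : HasFDerivAt (fun z => F3 (h z - a)) _ z := this
    rw [h3.fderiv]
    simp
  have h2 : ∀ v : En n, fderiv ℝ (fun z => fderiv ℝ (fun z => F3 (h z - a)) z v) p v =
      (3 * (max (h p - a) 0) ^ 2) * fderiv ℝ (fun z => fderiv ℝ h z v) p v
      + 6 * max (h p - a) 0 * (fderiv ℝ h p v) ^ 2 := by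
    intro v
    rw [(h1 v).fderiv_eq]
    have ha := (F3_hasDerivAt2 (h p - a)).comp_hasFDerivAt p ((hd p hp).hasFDerivAt.sub_const a)
    have hb : HasFDerivAt (fun z => fderiv ℝ h z v) (fderiv ℝ (fun z => fderiv ℝ h z v) p) p :=
      (hd2.clm_apply (differentiableAt_const v)).hasFDerivAt
    have hc := ha.mul hb
    have hc' : HasFDerivAt (fun z => (3 * (max (h z - a) 0) ^ 2) * fderiv ℝ h z v) _ p := hc
    rw [hc'.fderiv]
    simp
    ring
  unfold lap
  simp_rw [h2]
  rw [Finset.sum_add_distrib, ← Finset.mul_sum]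
  have := hh.2 p hp
  unfold lap at this
  rw [this, mul_zero, zero_add]
  refine Finset.sum_nonneg fun i _ => ?_
  have : 0 ≤ max (h p - a) 0 := le_max_right _ _
  positivity

open Classical in
def trunc (U : Set (En n)) (h : En n → ℝ) (a : ℝ) (z : En n) : ℝ :=
  if z ∈ U then F3 (h z - a) else 0

lemma F3_nonneg (t : ℝ) : 0 ≤ F3 t := by unfold F3; positivity
lemma F3_of_nonpos {t : ℝ} (ht : t ≤ 0) : F3 t = 0 := by
  unfold F3; rw [max_eq_right ht]; norm_num

lemma trunc_nonneg (U : Set (En n)) (h : En n → ℝ) (a : ℝ) (z : En n) : 0 ≤ trunc U h a z := by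
  unfold trunc; split_ifs
  · exact F3_nonneg _
  · exact le_rfl

lemma trunc_local {U : Set (En n)} (hU : IsOpen U) {h : En n → ℝ}
    (hc : ContinuousOn h (closure U)) (hb : ∀ z ∈ frontier U, h z = 0) {a : ℝ} (ha : 0 < a)
    (p : En n) : (p ∈ U ∧ trunc U h a =ᶠ[𝓝 p] fun z => F3 (h z - a)) ∨
      trunc U h a =ᶠ[𝓝 p] fun _ => 0 := by
  by_cases hp : p ∈ U
  · left
    refine ⟨hp, ?_⟩
    filter_upwards [hU.mem_nhds hp] with z hz
    simp [trunc, hz]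
  right
  by_cases hp2 : p ∈ closure U
  · have hf : p ∈ frontier U := by rw [hU.frontier_eq]; exact ⟨hp2, hp⟩
    have h1 : ∀ᶠ z in 𝓝[closure U] p, h z < a :=
      (hc p hp2).eventually_lt continuousWithinAt_const (by rw [hb p hf]; exact ha)
    rw [eventually_nhdsWithin_iff] at h1
    filter_upwards [h1] with z hz
    unfold trunc
    split_ifs with hzU
    · exact F3_of_nonpos (by linarith [hz (subset_closure hzU)])
    · rfl
  · filter_upwards [isClosed_closure.isOpen_compl.mem_nhds hp2] with z hz
    have : z ∉ U := fun h => hz (subset_closure h)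
    simp [trunc, this]

lemma trunc_contDiff {U : Set (En n)} (hU : IsOpen U) {h : En n → ℝ}
    (hc : ContinuousOn h (closure U)) (hb : ∀ z ∈ frontier U, h z = 0) (hh : IsHarmonicOn h U)
    {a : ℝ} (ha : 0 < a) : ContDiff ℝ 2 (trunc U h a) := by
  rw [contDiff_iff_contDiffAt]
  intro p
  rcases trunc_local hU hc hb ha p with ⟨hp, h1⟩ | h1
  · refine ContDiffAt.congr_of_eventuallyEq ?_ h1
    exact F3_contDiff.contDiffAt.comp p
      ((hh.1.contDiffAt (hU.mem_nhds hp)).sub contDiffAt_const)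
  · exact contDiffAt_const.congr_of_eventuallyEq h1

lemma trunc_lap {U : Set (En n)} (hU : IsOpen U) {h : En n → ℝ}
    (hc : ContinuousOn h (closure U)) (hb : ∀ z ∈ frontier U, h z = 0) (hh : IsHarmonicOn h U)
    {a : ℝ} (ha : 0 < a) (p : En n) : 0 ≤ lap (trunc U h a) p := by
  rcases trunc_local hU hc hb ha p with ⟨hp, h1⟩ | h1
  · rw [lap_congr_s2 h1]; exact lap_F3_comp hU hh a hp
  · rw [lap_congr_s2 h1, lap_zero]

lemma Psi_integrable : Integrable (Psi : En n → ℝ) :=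
  Psi_cont.integrable_of_hasCompactSupport Psi_supp

def IPsi (n : ℕ) : ℝ := ∫ y, Psi (n := n) y
def Vb (n : ℕ) (k : ℝ) : ℝ := volume.real (ball (0 : En n) k)

lemma Vb_pos {k : ℝ} (hk : 0 < k) : 0 < Vb n k := by
  unfold Vb
  exact ENNReal.toReal_pos (measure_ball_pos _ _ hk).ne' measure_ball_lt_top.ne

lemma Vb_le {k : ℝ} (hk : k ≤ 1/2) : Vb n k ≤ IPsi n := by
  unfold Vb IPsi
  rw [← integral_indicator_one measurableSet_ball]
  refine integral_mono ?_ Psi_integrable ?_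
  · exact (integrable_indicator_iff measurableSet_ball).2
      (integrableOn_const (measure_ball_lt_top.ne))
  · intro y
    by_cases hy : y ∈ ball (0 : En n) k
    · rw [indicator_of_mem hy]
      refine Psi_ge y ?_
      simp at hy; linarith
    · rw [indicator_of_notMem hy]; exact Psi_nonneg y

lemma IPsi_pos : 0 < IPsi n := (Vb_pos (n := n) (k := 1/2) (by norm_num)).trans_le (Vb_le le_rfl)

lemma decay_s2 (w : En n → ℝ) (hw : ContDiff ℝ 2 w) (hl : ∀ z, 0 ≤ lap w z)
    (x z : En n) (R k M : ℝ) (hR : 0 < R) (hk : k ≤ 1/4) (hM : 0 ≤ M)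
    (hz : dist z x ≤ R / 4) (h0 : ∀ p ∈ ball z (k * R), w p = 0) (h1 : ∀ p ∈ ball x R, w p ≤ M) :
    w x * IPsi n ≤ M * (IPsi n - Vb n k) := by
  refine (submean w hw x R hR.le (fun z _ => hl z)).trans ?_
  set p : En n := R⁻¹ • (z - x) with hp
  have hpn : ‖p‖ ≤ 1/4 := by
    rw [hp, norm_smul, norm_inv, Real.norm_of_nonneg hR.le, ← dist_eq_norm, inv_mul_le_iff₀ hR]
    linarith
  have hV : Vb n k = ∫ y, (ball p k).indicator 1 y := by
    rw [integral_indicator_one measurableSet_ball, Vb]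
    simp only [measureReal_def]
    rw [Measure.addHaar_ball_center volume p]
  have hind : Integrable (fun y => (ball p k).indicator (1 : En n → ℝ) y) :=
    (integrable_indicator_iff measurableSet_ball).2 (integrableOn_const (measure_ball_lt_top.ne))
  unfold IPsi
  rw [hV, ← integral_sub Psi_integrable hind, ← integral_const_mul]
  refine integral_mono ?_ ((Psi_integrable.sub hind).const_mul M) ?_
  · have := hw.continuous
    have := Psi_cont (n := n)
    exact Continuous.integrable_of_hasCompactSupport (by fun_prop) Psi_supp.mul_left
  · intro y
    simp only
    by_cases hy1 : ‖y‖ < 1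
    · by_cases hy : y ∈ ball p k
      · rw [h0, indicator_of_mem hy]
        · have hyn : ‖y‖ ≤ 1/2 := by
            have : ‖y - p‖ < k := by rwa [← dist_eq_norm]
            calc ‖y‖ = ‖(y - p) + p‖ := by simp
              _ ≤ _ := norm_add_le _ _
              _ ≤ 1/2 := by linarith
          have := Psi_ge y hyn
          simp only [Pi.one_apply, zero_mul]
          exact mul_nonneg hM (by linarith)
        · have : x + R • y - z = R • (y - p) := by
            rw [hp, smul_sub, smul_inv_smul₀ hR.ne']; abel
          rw [mem_ball, dist_eq_norm, this, norm_smul, Real.norm_of_nonneg hR.le, mul_comm k]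
          rw [mem_ball, dist_eq_norm] at hy
          gcongr
      · rw [indicator_of_notMem hy, sub_zero]
        refine mul_le_mul_of_nonneg_right (h1 _ ?_) (Psi_nonneg y)
        rw [mem_ball, dist_eq_norm, add_sub_cancel_left, norm_smul, Real.norm_of_nonneg hR.le]
        nlinarith
    · have hy : y ∉ ball p k := by
        intro hy
        rw [mem_ball, dist_eq_norm] at hy
        have : ‖y‖ ≤ ‖y - p‖ + ‖p‖ := by
          calc ‖y‖ = ‖(y - p) + p‖ := by simp
              _ ≤ _ := norm_add_le _ _
        linarith
      rw [indicator_of_notMem hy, Psi_zero y (not_lt.1 hy1)]; simp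

def CH (n : ℕ) : ℝ := 6 * 4 ^ n

lemma harnack {U : Set (En n)} (hU : IsOpen U) {h : En n → ℝ} (hh : IsHarmonicOn h U)
    (hpos : ∀ z ∈ U, 0 < h z) (x y : En n) (R : ℝ) (hR : 0 < R) (hB : ball x R ⊆ U)
    (hy : dist y x ≤ R / 8) : h y ≤ CH n * h x := by
  let f : ContDiffBump x := ⟨R/2, 3*R/4, by linarith, by linarith⟩
  set w : En n → ℝ := fun z => f z * h z with hwdef
  have hw : ContDiff ℝ 2 w := by
    rw [contDiff_iff_contDiffAt]
    intro p
    by_cases hp : p ∈ ball x R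
    · exact f.contDiff.contDiffAt.mul (hh.1.contDiffAt (hU.mem_nhds (hB hp)))
    · have : w =ᶠ[𝓝 p] fun _ => 0 := by
        have h1 : p ∈ (closedBall x (3*R/4))ᶜ := by
          simp at hp ⊢; linarith
        filter_upwards [isClosed_closedBall.isOpen_compl.mem_nhds h1] with z hz
        have : f z = 0 := f.zero_of_le_dist (by simp at hz; exact hz.le)
        simp [hwdef, this]
      exact contDiffAt_const.congr_of_eventuallyEq this
  have hwnn : ∀ z, 0 ≤ w z := by
    intro z
    by_cases hz : z ∈ ball x R
    · exact mul_nonneg f.nonneg (hpos z (hB hz)).le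
    · have : f z = 0 := f.zero_of_le_dist (by
        simp at hz; change 3*R/4 ≤ _; linarith)
      simp [hwdef, this]
  have heq : ∀ z ∈ closedBall x (R/2), w z = h z := by
    intro z hz
    have : f z = 1 := f.one_of_mem_closedBall hz
    simp [hwdef, this]
  have hlap : ∀ z ∈ ball x (R/2), lap w z = 0 := by
    intro z hz
    rw [lap_congr_s2 (g := h)]
    · exact hh.2 z (hB (ball_subset_ball (by linarith) hz))
    · filter_upwards [isOpen_ball.mem_nhds hz] with p hp
      exact heq p (ball_subset_closedBall hp)
  have h1 := submean w hw y (R/8) (by linarith) (fun z hz => (hlap z (by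
    rw [mem_ball] at hz ⊢
    linarith [dist_triangle z y x])).ge)
  have h2 := submean (fun z => - w z) hw.neg x (R/2) (by linarith) (fun z hz => by
    rw [lap_neg, hlap z hz, neg_zero])
  simp only [neg_mul, integral_neg, neg_le_neg_iff] at h2
  have hwc := hw.continuous
  have hPc := Psi_cont (n := n)
  set p : En n := (R/2)⁻¹ • (y - x) with hp
  have hpn : ‖p‖ ≤ 1/4 := by
    rw [hp, norm_smul, norm_inv, Real.norm_of_nonneg (by linarith), ← dist_eq_norm,
      inv_mul_le_iff₀ (by linarith)]
    linarith
  have h3 : ∫ v, w (y + (R/8) • v) * Psi v ≤ CH n * ∫ v, w (x + (R/2) • v) * Psi v := by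
    set g : En n → ℝ := fun u => w (x + (R/2) • u) * Psi ((4:ℝ) • (u - p)) with hg
    have e1 : ∀ v, w (y + (R/8) • v) * Psi v = g (p + (1/4 : ℝ) • v) := by
      intro v
      simp only [hg]
      have a1 : x + (R/2) • (p + (1/4:ℝ) • v) = y + (R/8) • v := by
        rw [hp, smul_add, smul_inv_smul₀ (by linarith), smul_smul]
        rw [show R/2*(1/4) = R/8 by ring]; abel
      have a2 : (4:ℝ) • (p + (1/4:ℝ) • v - p) = v := by
        rw [add_sub_cancel_left, smul_smul]; norm_num
      rw [a1, a2]
    simp_rw [e1]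
    rw [Measure.integral_comp_smul volume (fun u => g (p + u)) (1/4 : ℝ),
      integral_add_left_eq_self]
    have hfr : |((1/4:ℝ) ^ Module.finrank ℝ (En n))⁻¹| = 4 ^ n := by
      rw [finrank_euclideanSpace_fin]
      rw [← inv_pow, abs_of_pos (by positivity)]; norm_num
    rw [hfr, CH, smul_eq_mul, mul_assoc, mul_left_comm]
    refine mul_le_mul_of_nonneg_left ?_ (by positivity)
    rw [← integral_const_mul]
    have hsup : ∀ u : En n, Psi ((4:ℝ) • (u - p)) ≤ 6 * Psi u := by
      intro u
      by_cases hu : ‖u‖ ≤ 1/2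
      · have := Psi_ge u hu
        have := Psi_le ((4:ℝ) • (u - p))
        linarith
      · rw [Psi_zero ((4:ℝ) • (u - p))]
        · have := Psi_nonneg u; linarith
        · rw [norm_smul]
          have : ‖u‖ ≤ ‖u - p‖ + ‖p‖ := by
            calc ‖u‖ = ‖(u - p) + p‖ := by simp
              _ ≤ _ := norm_add_le _ _
          norm_num
          linarith
    refine integral_mono_of_nonneg (Eventually.of_forall fun u => ?_) ?_
      (Eventually.of_forall fun u => ?_)
    · exact mul_nonneg (hwnn _) (Psi_nonneg _)
    · exact (Continuous.integrable_of_hasCompactSupport (by fun_prop) Psi_supp.mul_left).const_mul 6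
    · simp only [hg]
      nlinarith [mul_le_mul_of_nonneg_left (hsup u) (hwnn (x + (R/2) • u))]
  have hI := IPsi_pos (n := n)
  unfold IPsi at hI
  have hCH : 0 ≤ CH n := by unfold CH; positivity
  have h4 : w y * ∫ v, Psi (n := n) v ≤ (CH n * w x) * ∫ v, Psi (n := n) v := by
    rw [mul_assoc (CH n)]
    exact (h1.trans h3).trans (mul_le_mul_of_nonneg_left h2 hCH)
  have h5 := le_of_mul_le_mul_right h4 hI
  rwa [heq y, heq x] at h5
  · simp; linarith
  · simp; linarith

lemma ball_infDist_subset {U : Set (En n)} (hU : IsOpen U) {z : En n} (hz : z ∈ U) :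
    ball z (infDist z (frontier U)) ⊆ U := by
  rcases (infDist_nonneg (x := z) (s := frontier U)).eq_or_lt with h0 | hr
  · rw [← h0, ball_zero]; exact empty_subset _
  have hpre : IsPreconnected (ball z (infDist z (frontier U))) := (convex_ball _ _).isPreconnected
  refine hpre.subset_left_of_subset_union hU
    (isClosed_closure (s := U)).isOpen_compl ?_ ?_
    ⟨z, mem_ball_self hr, hz⟩
  · exact disjoint_compl_right.mono_left subset_closure
  · intro v hv
    by_contra hcon
    rw [mem_union, not_or] at hcon
    have hvf : v ∈ frontier U := by
      rw [hU.frontier_eq]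
      exact ⟨not_not.1 hcon.2, hcon.1⟩
    have := infDist_le_dist_of_mem (x := z) hvf
    rw [mem_ball, dist_comm] at hv
    linarith

lemma ivt_dist {γ : ℝ → En n} {a : ℝ} (ha : a ∈ Icc (0:ℝ) 1) (hc : ContinuousOn γ (Icc 0 1)) {D : ℝ}
    (hD : 0 ≤ D) (hD2 : D ≤ dist (γ a) (γ 1)) : ∃ t ∈ Icc a 1, dist (γ a) (γ t) = D := by
  have h1 : ContinuousOn (fun t => dist (γ a) (γ t)) (Icc a 1) :=
    continuous_dist.comp_continuousOn
      (continuousOn_const.prodMk (hc.mono (Icc_subset_Icc_left ha.1)))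
  have := intermediate_value_Icc ha.2 h1
  obtain ⟨t, ht, hte⟩ := this ⟨by simpa using hD, hD2⟩
  exact ⟨t, ht, hte⟩

lemma CH_ge : 1 ≤ CH n := by
  unfold CH
  have : (1:ℝ) ≤ 4 ^ n := one_le_pow₀ (by norm_num)
  linarith

lemma curve_chain {U : Set (En n)} (hU : IsOpen U) {h : En n → ℝ} (hh : IsHarmonicOn h U)
    (hpos : ∀ z ∈ U, 0 < h z) {γ : ℝ → En n} (hc : ContinuousOn γ (Icc 0 1))
    (hm : MapsTo γ (Icc 0 1) U) {d : ℝ} (hd : 0 < d)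
    (hδ : ∀ t ∈ Icc (0:ℝ) 1, 8 * d ≤ infDist (γ t) (frontier U)) :
    ∀ N : ℕ, ∀ a ∈ Icc (0:ℝ) 1, eVariationOn γ (Icc a 1) ≤ N * ENNReal.ofReal d →
      h (γ a) ≤ CH n ^ (N + 1) * h (γ 1) := by
  have one : (1:ℝ) ∈ Icc (0:ℝ) 1 := ⟨zero_le_one, le_rfl⟩
  have step : ∀ s ∈ Icc (0:ℝ) 1, ∀ t ∈ Icc (0:ℝ) 1, dist (γ s) (γ t) ≤ d →
      h (γ s) ≤ CH n * h (γ t) := by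
    intro s hs t ht hst
    refine harnack hU hh hpos (γ t) (γ s) (8 * d) (by linarith) ?_ (by linarith)
    exact (ball_subset_ball (hδ t ht)).trans (ball_infDist_subset hU (hm ht))
  have hCH := CH_ge (n := n)
  have hone := hpos _ (hm one)
  intro N
  induction N with
  | zero =>
    intro a ha hv
    simp only [Nat.cast_zero, zero_mul, nonpos_iff_eq_zero] at hv
    have h1 : edist (γ a) (γ 1) ≤ eVariationOn γ (Icc a 1) :=
      eVariationOn.edist_le _ (left_mem_Icc.2 ha.2) (right_mem_Icc.2 ha.2)
    rw [hv, nonpos_iff_eq_zero, edist_eq_zero] at h1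
    rw [h1]; simp only [zero_add, pow_one]; nlinarith
  | succ N ih =>
    intro a ha hv
    by_cases hda : dist (γ a) (γ 1) ≤ d
    · refine (step a ha 1 one hda).trans ?_
      refine mul_le_mul_of_nonneg_right ?_ hone.le
      exact le_self_pow₀ hCH (by omega)
    · obtain ⟨b, hb, hbd⟩ := ivt_dist ha hc hd.le (not_le.1 hda).le
      have hb' : b ∈ Icc (0:ℝ) 1 := ⟨ha.1.trans hb.1, hb.2⟩
      have h1 : edist (γ a) (γ b) ≤ eVariationOn γ (Icc a b) :=
        eVariationOn.edist_le _ (left_mem_Icc.2 hb.1) (right_mem_Icc.2 hb.1)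
      have h2 := eVariationOn.Icc_add_Icc γ (s := univ) hb.1 hb.2 (mem_univ b)
      simp only [univ_inter] at h2
      rw [edist_dist, hbd] at h1
      have h3 : eVariationOn γ (Icc b 1) ≤ N * ENNReal.ofReal d := by
        have : ENNReal.ofReal d + eVariationOn γ (Icc b 1) ≤
            ENNReal.ofReal d + N * ENNReal.ofReal d := by
          calc _ ≤ eVariationOn γ (Icc a b) + eVariationOn γ (Icc b 1) := by gcongr
            _ = eVariationOn γ (Icc a 1) := h2
            _ ≤ _ := hv
            _ = _ := by push_cast; ring
        exact (ENNReal.add_le_add_iff_left ENNReal.ofReal_ne_top).1 this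
      have h4 := ih b hb' h3
      calc h (γ a) ≤ CH n * h (γ b) := step a ha b hb' hbd.le
        _ ≤ CH n * (CH n ^ (N+1) * h (γ 1)) := by gcongr
        _ = _ := by ring

def AK (n : ℕ) (c C K : ℝ) : ℝ := CH n ^ (⌈16 * C * K / c⌉₊ + 1)

lemma chain {U : Set (En n)} {c C : ℝ} (hc0 : 0 < c) (hc1 : c < 1) (hC : 1 < C)
    (hunif : IsUniformDomain c C U) {h : En n → ℝ} (hh : IsHarmonicOn h U)
    (hpos : ∀ z ∈ U, 0 < h z) {K ρ : ℝ} (hρ : 0 < ρ) {p q : En n}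
    (hp : p ∈ U) (hq : q ∈ U) (hδp : ρ ≤ infDist p (frontier U)) (hδq : ρ ≤ infDist q (frontier U))
    (hpq : dist p q ≤ K * ρ) : h p ≤ AK n c C K * h q := by
  obtain ⟨hU, -, hcur⟩ := hunif
  obtain ⟨γ, ⟨hγc, hγm, hγ0, hγ1⟩, hlen, hγδ⟩ := hcur p hp q hq
  have h1 := curve_chain hU hh hpos hγc hγm (d := c * ρ / 16) (by positivity) ?_
    ⌈16 * C * K / c⌉₊ 0 ⟨le_rfl, zero_le_one⟩ ?_
  · rw [hγ0, hγ1] at h1; exact h1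
  · intro t ht
    have h2 := hγδ t ht
    rcases lt_or_ge (dist p (γ t)) (ρ/2) with h3 | h3
    · have := infDist_le_infDist_add_dist (s := frontier U) (x := p) (y := γ t)
      nlinarith
    · rcases lt_or_ge (dist (γ t) q) (ρ/2) with h4 | h4
      · have := infDist_le_infDist_add_dist (s := frontier U) (x := q) (y := γ t)
        rw [dist_comm] at this
        nlinarith
      · have : ρ/2 ≤ min (dist p (γ t)) (dist (γ t) q) := le_min h3 h4
        nlinarith
  · refine hlen.trans ?_
    rw [← ENNReal.ofReal_natCast, ← ENNReal.ofReal_mul (by positivity)]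
    refine ENNReal.ofReal_le_ofReal ?_
    have h5 := Nat.le_ceil (16 * C * K / c)
    calc C * dist p q ≤ C * (K * ρ) := by gcongr
      _ = (16 * C * K / c) * (c * ρ / 16) := by field_simp
      _ ≤ _ := by gcongr

lemma AK_gt (c C K : ℝ) : 1 < AK n c C K := by
  unfold AK
  refine one_lt_pow₀ ?_ (by omega)
  unfold CH
  have : (1:ℝ) ≤ 4 ^ n := one_le_pow₀ (by norm_num)
  linarith

def AA (n : ℕ) (c C : ℝ) : ℝ := AK n c C (32 / c ^ 2)

lemma growth_s2 {U : Set (En n)} {c C : ℝ} (hc0 : 0 < c) (hc1 : c < 1) (hC : 1 < C)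
    (hunif : IsUniformDomain c C U) {h : En n → ℝ} (hh : IsHarmonicOn h U)
    (hpos : ∀ z ∈ U, 0 < h z) {r : ℝ} (hr : 0 < r) {q : En n}
    (hq : q ∈ U) (hδq : c * r / 8 ≤ infDist q (frontier U)) :
    ∀ k : ℕ, ∀ z ∈ U, r / 2 ^ k ≤ infDist z (frontier U) →
      dist z q ≤ (2 + 2 / c / 2 ^ k) * r → h z ≤ AA n c C ^ (k + 1) * h q := by
  have hA : 1 < AA n c C := AK_gt _ _ _
  have hhq := hpos q hq
  intro k
  induction k with
  | zero =>
    intro z hz hδz hd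
    simp only [pow_zero, div_one, zero_add, pow_one] at *
    refine chain hc0 hc1 hC hunif hh hpos (ρ := c * r / 8) (by positivity) hz hq ?_ hδq ?_
    · nlinarith
    · refine hd.trans ?_
      have : 32 / c ^ 2 * (c * r / 8) = (4 / c) * r := by field_simp; norm_num
      rw [this]
      gcongr
      have : 1 ≤ 1 / c := by rw [le_div_iff₀ hc0]; linarith
      have e : 4 / c = 2 * (1/c) + 2 / c := by ring
      rw [e]; linarith
  | succ k ih =>
    intro z hz hδz hd
    set s : ℝ := r / 2 ^ (k+1) with hs
    have hs0 : 0 < s := by positivity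
    have hsr : s ≤ r := div_le_self hr.le (one_le_pow₀ (by norm_num))
    have hs2 : 2 * s = r / 2 ^ k := by rw [hs, pow_succ]; field_simp
    rcases lt_or_ge (dist z q) (2 * (2 * s / c)) with h1 | h1
    · have : h z ≤ AA n c C * h q := by
        refine chain hc0 hc1 hC hunif hh hpos (ρ := c * s / 8) (by positivity) hz hq ?_ ?_ ?_
        · nlinarith
        · refine le_trans ?_ hδq
          gcongr
        · refine h1.le.trans (le_of_eq ?_)
          field_simp; norm_num
      refine this.trans (mul_le_mul_of_nonneg_right ?_ hhq.le)
      exact le_self_pow₀ hA.le (by omega)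
    · obtain ⟨γ, ⟨hγc, hγm, hγ0, hγ1⟩, hlen, hγδ⟩ := hunif.2.2 z hz q hq
      have hD0 : 0 < 2 * s / c := by positivity
      obtain ⟨t, ht, htd⟩ := ivt_dist (a := 0) ⟨le_rfl, zero_le_one⟩ hγc hD0.le
        (by rw [hγ0, hγ1]; linarith)
      rw [hγ0] at htd
      have h2 := hγδ t ht
      have h3 : 2 * s / c ≤ dist (γ t) q := by
        linarith [dist_triangle z (γ t) q]
      rw [htd, min_eq_left h3, mul_div_cancel₀ _ hc0.ne'] at h2
      have h4 := ih (γ t) (hγm ht) (by rw [← hs2]; exact h2) (by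
        have h5 := dist_triangle (γ t) z q
        rw [dist_comm (γ t) z, htd] at h5
        have e1 : 2 * s / c = 1 / c / 2 ^ k * r := by rw [hs2]; field_simp
        have e2 : (2 + 2 / c / 2 ^ (k+1)) * r = (2 + 1 / c / 2 ^ k) * r := by
          rw [pow_succ]; field_simp
        have e3 : (2 + 2 / c / 2 ^ k) * r = (2 + 1 / c / 2 ^ k) * r + 1 / c / 2 ^ k * r := by ring
        linarith)
      have h6 : h z ≤ AA n c C * h (γ t) := by
        refine chain hc0 hc1 hC hunif hh hpos hs0 hz (hγm ht) hδz (by linarith) ?_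
        rw [htd]
        have : 2 * s / c = 2 / c * s := by ring
        rw [this]
        gcongr ?_ * s
        rw [div_le_div_iff₀ hc0 (by positivity)]
        nlinarith
      calc h z ≤ AA n c C * h (γ t) := h6
        _ ≤ AA n c C * (AA n c C ^ (k + 1) * h q) := by gcongr
        _ = _ := by ring

lemma corkscrew {U : Set (En n)} {c C : ℝ}
    (hunif : IsUniformDomain c C U) (hub : ¬ Bornology.IsBounded U) {x : En n} (hx : x ∈ U)
    {R : ℝ} (hR : 0 < R) :
    ∃ z ∈ U, dist z x = R / 4 ∧ c * (R / 4) ≤ infDist z (frontier U) := by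
  have : ∃ y ∈ U, R ≤ dist x y := by
    by_contra hcon
    push Not at hcon
    refine hub (isBounded_ball.subset (?_ : U ⊆ ball x R))
    intro y hy
    rw [mem_ball, dist_comm]; exact hcon y hy
  obtain ⟨y, hy, hxy⟩ := this
  obtain ⟨γ, ⟨hγc, hγm, hγ0, hγ1⟩, hlen, hγδ⟩ := hunif.2.2 x hx y hy
  obtain ⟨t, ht, htd⟩ := ivt_dist (a := 0) (D := R/4) ⟨le_rfl, zero_le_one⟩ hγc (by linarith)
        (by rw [hγ0, hγ1]; linarith)
  rw [hγ0] at htd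
  refine ⟨γ t, hγm ht, by rw [dist_comm]; exact htd, ?_⟩
  have h2 := hγδ t ht
  rwa [htd, min_eq_left] at h2
  linarith [dist_triangle x (γ t) y]

def Lam (n : ℕ) (c : ℝ) : ℝ := IPsi n / (IPsi n - Vb n (c/8) / 2)

lemma Lam_aux {c : ℝ} (hc0 : 0 < c) (hc1 : c < 1) : 0 < IPsi n - Vb n (c/8) / 2 := by
  have h1 := Vb_pos (n := n) (k := c/8) (by positivity)
  have h2 := Vb_le (n := n) (k := c/8) (by linarith)
  linarith

lemma Lam_gt {c : ℝ} (hc0 : 0 < c) (hc1 : c < 1) : 1 < Lam n c := by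
  have h1 := Vb_pos (n := n) (k := c/8) (by positivity)
  unfold Lam
  rw [one_lt_div (Lam_aux hc0 hc1)]
  linarith

lemma one_step {U : Set (En n)} {c C : ℝ} (hc0 : 0 < c) (hc1 : c < 1) (hC : 1 < C)
    (hunif : IsUniformDomain c C U) (hub : ¬ Bornology.IsBounded U)
    (hne : (frontier U).Nonempty) {h : En n → ℝ}
    (hcl : ContinuousOn h (closure U)) (hb : ∀ z ∈ frontier U, h z = 0) (hh : IsHarmonicOn h U)
    (hpos : ∀ z ∈ U, 0 < h z) {r : ℝ} (hr : 0 < r) {q : En n}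
    (hq : q ∈ U) (hδq : c * r / 8 ≤ infDist q (frontier U)) (k : ℕ) {x : En n}
    (hw : 0 < trunc U h (AA n c C ^ (k+1) * h q) x)
    (hxd : dist x q + 8 * r / (c * 2 ^ k) ≤ 2 * r) :
    ∃ x', dist x' x ≤ 8 * r / (c * 2 ^ k) ∧
      Lam n c * trunc U h (AA n c C ^ (k+1) * h q) x ≤ trunc U h (AA n c C ^ (k+1) * h q) x' := by
  have hA : 1 < AA n c C := AK_gt _ _ _
  set R : ℝ := 8 * r / (c * 2 ^ k) with hR
  have hR0 : 0 < R := by positivity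
  set a : ℝ := AA n c C ^ (k+1) * h q with ha
  have ha0 : 0 < a := mul_pos (pow_pos (by linarith) _) (hpos q hq)
  have hxU : x ∈ U := by
    by_contra hx
    unfold trunc at hw
    rw [if_neg hx] at hw
    exact lt_irrefl _ hw
  have hU := hunif.1
  have hcd := trunc_contDiff hU hcl hb hh ha0
  obtain ⟨x', hx', hmax⟩ := (isCompact_closedBall x R).exists_isMaxOn
    ⟨x, mem_closedBall_self hR0.le⟩ hcd.continuous.continuousOn
  obtain ⟨z, hz, hzx, hzδ⟩ := corkscrew hunif hub hxU hR0
  have hdec := decay_s2 (trunc U h a) hcd (trunc_lap hU hcl hb hh ha0) x z R (c/8)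
    (trunc U h a x') hR0 (by linarith) (trunc_nonneg _ _ _ _) hzx.le ?_
    (fun p hp => hmax (ball_subset_closedBall hp))
  · refine ⟨x', hx', ?_⟩
    unfold Lam
    rw [div_mul_eq_mul_div, div_le_iff₀ (Lam_aux hc0 hc1)]
    have h1 := Vb_pos (n := n) (k := c/8) (by positivity)
    have h2 := trunc_nonneg U h a x'
    nlinarith
  · intro p hp
    unfold trunc
    split_ifs with hpU
    · refine F3_of_nonpos (sub_nonpos.2 ?_)
      rw [mem_ball] at hp
      refine growth_s2 hc0 hc1 hC hunif hh hpos hr hq hδq k p hpU ?_ ?_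
      · have h1 := infDist_le_infDist_add_dist (s := frontier U) (x := z) (y := p)
        rw [dist_comm] at h1
        have h2 : r / 2 ^ k = c * R / 8 := by rw [hR]; field_simp
        rw [h2]
        linarith
      · have h1 : dist p q ≤ dist p z + dist z x + dist x q := dist_triangle4 _ _ _ _
        have h2 : c / 8 * R ≤ R / 8 := by nlinarith
        have h3 : 0 ≤ 2 / c / 2 ^ k * r := by positivity
        nlinarith
    · rfl

lemma many_steps {U : Set (En n)} {c C : ℝ} (hc0 : 0 < c) (hc1 : c < 1) (hC : 1 < C)
    (hunif : IsUniformDomain c C U) (hub : ¬ Bornology.IsBounded U)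
    (hne : (frontier U).Nonempty) {h : En n → ℝ}
    (hcl : ContinuousOn h (closure U)) (hb : ∀ z ∈ frontier U, h z = 0) (hh : IsHarmonicOn h U)
    (hpos : ∀ z ∈ U, 0 < h z) {r : ℝ} (hr : 0 < r) {q : En n}
    (hq : q ∈ U) (hδq : c * r / 8 ≤ infDist q (frontier U)) (k : ℕ) {x : En n}
    (hw : 0 < trunc U h (AA n c C ^ (k+1) * h q) x) (m : ℕ)
    (hxd : dist x q + m * (8 * r / (c * 2 ^ k)) ≤ 2 * r) :
    ∃ x', dist x' x ≤ m * (8 * r / (c * 2 ^ k)) ∧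
      Lam n c ^ m * trunc U h (AA n c C ^ (k+1) * h q) x ≤
        trunc U h (AA n c C ^ (k+1) * h q) x' := by
  have hL := Lam_gt (n := n) hc0 hc1
  have hR0 : 0 < 8 * r / (c * 2 ^ k) := by positivity
  induction m with
  | zero => exact ⟨x, by simp, by simp⟩
  | succ m ih =>
    push_cast at hxd
    obtain ⟨x1, hx1, hx1w⟩ := ih (by linarith)
    have hw1 : 0 < trunc U h (AA n c C ^ (k+1) * h q) x1 :=
      lt_of_lt_of_le (mul_pos (pow_pos (by linarith) _) hw) hx1w
    obtain ⟨x2, hx2, hx2w⟩ := one_step hc0 hc1 hC hunif hub hne hcl hb hh hpos hr hq hδq k hw1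
      (by linarith [dist_triangle x1 x q])
    refine ⟨x2, ?_, ?_⟩
    · push_cast
      linarith [dist_triangle x2 x1 x]
    · calc _ = Lam n c * (Lam n c ^ m * trunc U h (AA n c C ^ (k+1) * h q) x) := by ring
        _ ≤ Lam n c * trunc U h (AA n c C ^ (k+1) * h q) x1 := by gcongr
        _ ≤ _ := hx2w

lemma block {U : Set (En n)} {c C : ℝ} (hc0 : 0 < c) (hc1 : c < 1) (hC : 1 < C)
    (hunif : IsUniformDomain c C U) (hub : ¬ Bornology.IsBounded U)
    (hne : (frontier U).Nonempty) {h : En n → ℝ}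
    (hcl : ContinuousOn h (closure U)) (hb : ∀ z ∈ frontier U, h z = 0) (hh : IsHarmonicOn h U)
    (hpos : ∀ z ∈ U, 0 < h z) {r : ℝ} (hr : 0 < r) {q : En n}
    (hq : q ∈ U) (hδq : c * r / 8 ≤ infDist q (frontier U)) (k : ℕ) {x : En n} (hx : x ∈ U)
    (hw : 2 * (AA n c C ^ (k+1) * h q) ≤ h x) (m : ℕ) (hm : (2 * AA n c C) ^ 3 ≤ Lam n c ^ m)
    (hxd : dist x q + m * (8 * r / (c * 2 ^ k)) ≤ 2 * r) :
    ∃ x' ∈ U, dist x' x ≤ m * (8 * r / (c * 2 ^ k)) ∧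
      2 * (AA n c C ^ (k+1+1) * h q) ≤ h x' := by
  have hA : 1 < AA n c C := AK_gt _ _ _
  set a : ℝ := AA n c C ^ (k+1) * h q with ha
  have ha0 : 0 < a := mul_pos (pow_pos (by linarith) _) (hpos q hq)
  have h1 : a ^ 3 ≤ trunc U h a x := by
    unfold trunc F3
    rw [if_pos hx]
    gcongr
    exact le_max_of_le_left (by linarith)
  have h2 : 0 < trunc U h a x := lt_of_lt_of_le (by positivity) h1
  obtain ⟨x', hx', hx'w⟩ := many_steps hc0 hc1 hC hunif hub hne hcl hb hh hpos hr hq hδq k h2 m hxd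
  have h3 : (2 * AA n c C * a) ^ 3 ≤ trunc U h a x' := by
    rw [mul_pow]
    exact (mul_le_mul hm h1 (by positivity) (by
      have := Lam_gt (n := n) hc0 hc1
      positivity)).trans hx'w
  have h4 : 0 < 2 * AA n c C * a := by positivity
  have hxU : x' ∈ U := by
    by_contra hx
    unfold trunc at h3
    rw [if_neg hx] at h3
    have : 0 < (2 * AA n c C * a) ^ 3 := by positivity
    linarith
  refine ⟨x', hxU, hx', ?_⟩
  unfold trunc F3 at h3
  rw [if_pos hxU] at h3
  have h5 := le_of_pow_le_pow_left₀ (by norm_num) (le_max_right _ _) h3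
  have h6 : 2 * AA n c C * a ≤ h x' - a := by
    rcases le_max_iff.1 h5 with h | h
    · exact h
    · linarith
  calc 2 * (AA n c C ^ (k+1+1) * h q) = 2 * AA n c C * a := by rw [ha]; ring
    _ ≤ h x' := by linarith

lemma dist_le_of_innerDist {U : Set (En n)} {x y : En n} {s : ℝ} (hs : 0 ≤ s)
    (h : innerDist U x y ≤ ENNReal.ofReal s) : dist x y ≤ s := by
  have h1 : edist x y ≤ innerDist U x y := by
    refine le_iInf fun γ => le_iInf fun hγ => ?_
    obtain ⟨-, -, h0, h1⟩ := hγ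
    rw [← h0, ← h1]
    exact eVariationOn.edist_le _ (left_mem_Icc.2 zero_le_one) (right_mem_Icc.2 zero_le_one)
  have h2 := h1.trans h
  rw [edist_dist] at h2
  exact (ENNReal.ofReal_le_ofReal_iff hs).1 h2

lemma carleson {U : Set (En n)} {c C : ℝ} (hc0 : 0 < c) (hc1 : c < 1) (hC : 1 < C)
    (hunif : IsUniformDomain c C U) (hub : ¬ Bornology.IsBounded U)
    (hne : (frontier U).Nonempty) {h : En n → ℝ}
    (hcl : ContinuousOn h (closure U)) (hb : ∀ z ∈ frontier U, h z = 0) (hh : IsHarmonicOn h U)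
    (hpos : ∀ z ∈ U, 0 < h z) {r : ℝ} (hr : 0 < r) {q : En n}
    (hq : q ∈ U) (hδq : c * r / 8 ≤ infDist q (frontier U)) (m k0 : ℕ)
    (hm : (2 * AA n c C) ^ 3 ≤ Lam n c ^ m) (hk : m * 8 / (c * 2 ^ k0) ≤ 3 / 8)
    {y : En n} (hy : y ∈ U) (hyq : dist y q ≤ 5 / 4 * r) :
    h y ≤ 2 * AA n c C ^ (k0 + 1) * h q := by
  by_contra hcon
  rw [not_le] at hcon
  have hA : 1 < AA n c C := AK_gt _ _ _
  have hhq := hpos q hq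
  set β : ℝ := m * 8 / (c * 2 ^ k0) with hβ
  have hβ0 : 0 ≤ β := by positivity
  have seq : ∀ j : ℕ, ∃ x ∈ U, 2 * (AA n c C ^ (k0 + j + 1) * h q) ≤ h x ∧
      dist x q ≤ (5 / 4 + 2 * β * (1 - 1 / 2 ^ j)) * r := by
    intro j
    induction j with
    | zero =>
      refine ⟨y, hy, ?_, ?_⟩
      · simp only [add_zero]; linarith
      · simpa using hyq
    | succ j ih =>
      obtain ⟨x, hx, hxw, hxd⟩ := ih
      have e1 : m * (8 * r / (c * 2 ^ (k0 + j))) = β / 2 ^ j * r := by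
        rw [hβ, pow_add]; field_simp
      have e2 : (5 / 4 + 2 * β * (1 - 1 / 2 ^ j)) * r + β / 2 ^ j * r =
          (5 / 4 + 2 * β * (1 - 1 / 2 ^ (j+1))) * r := by
        rw [pow_succ]; field_simp; ring
      have e3 : (5 / 4 + 2 * β * (1 - 1 / 2 ^ (j+1))) * r ≤ 2 * r := by
        gcongr
        have : 0 ≤ (1:ℝ) / 2 ^ (j+1) := by positivity
        nlinarith
      obtain ⟨x', hx', hx'd, hx'w⟩ := block hc0 hc1 hC hunif hub hne hcl hb hh hpos hr hq hδq
        (k0 + j) hx hxw m hm (by rw [e1]; linarith)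
      refine ⟨x', hx', hx'w, ?_⟩
      rw [e1] at hx'd
      linarith [dist_triangle x' x q]
  have hcomp : IsCompact (closure U ∩ closedBall q (2 * r)) :=
    (isCompact_closedBall q (2*r)).inter_left isClosed_closure
  obtain ⟨B, hB⟩ := hcomp.exists_bound_of_continuousOn (hcl.mono inter_subset_left)
  obtain ⟨j, hj⟩ := pow_unbounded_of_one_lt (B / h q) hA
  obtain ⟨x, hx, hxw, hxd⟩ := seq j
  have h1 : h x ≤ B := by
    refine (le_abs_self _).trans (hB x ⟨subset_closure hx, ?_⟩)
    rw [mem_closedBall]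
    refine hxd.trans ?_
    gcongr
    have : 0 ≤ (1:ℝ) / 2 ^ j := by positivity
    nlinarith
  rw [div_lt_iff₀ hhq] at hj
  have h2 : AA n c C ^ j ≤ AA n c C ^ (k0 + j + 1) := pow_le_pow_right₀ hA.le (by omega)
  have h3 := mul_le_mul_of_nonneg_right h2 hhq.le
  have h4 : 0 < AA n c C ^ j * h q := by positivity
  linarith

end Helpers

/-- Control of a harmonic profile on inner balls of an unbounded uniform domain:
`h(y) ≤ A₁ h(x_r)` for `y` in the inner ball `B_U(x,r)`, where `x_r` is an
interior point with `d_U(x,x_r) ≤ r/4` and `dist(x_r,∂U) ≥ c_u r/8`. -/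
theorem statement2 (n : ℕ) (hn : 1 ≤ n) (cu Cu : ℝ)
    (hcu : cu ∈ Set.Ioo (0:ℝ) 1) (hCu : 1 < Cu) :
    ∃ A₁ : ℝ, 1 < A₁ ∧
      ∀ U : Set (En n), U ≠ Set.univ → (frontier U).Nonempty →
        ¬ Bornology.IsBounded U → IsUniformDomain cu Cu U →
        ∀ h : En n → ℝ, ContinuousOn h (closure U) → (∀ z ∈ U, 0 < h z) →
          IsHarmonicOn h U → (∀ z ∈ frontier U, h z = 0) →
          ∀ x ∈ U, ∀ r : ℝ, 0 < r →
            ∀ xr ∈ U, innerDist U x xr ≤ ENNReal.ofReal (r / 4) →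
              cu * r / 8 ≤ Metric.infDist xr (frontier U) →
              ∀ y ∈ U, innerDist U x y < ENNReal.ofReal r → h y ≤ A₁ * h xr := by
  obtain ⟨hc0, hc1⟩ := hcu
  have hA : 1 < AA n cu Cu := AK_gt _ _ _
  obtain ⟨m, hm⟩ := pow_unbounded_of_one_lt ((2 * AA n cu Cu) ^ 3) (Lam_gt (n := n) hc0 hc1)
  obtain ⟨k0, hk0⟩ := pow_unbounded_of_one_lt (m * 8 / cu * (8 / 3)) (one_lt_two : (1:ℝ) < 2)
  have hk : m * 8 / (cu * 2 ^ k0) ≤ 3 / 8 := by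
    rw [← div_div, div_le_iff₀ (by positivity)]
    linarith
  refine ⟨2 * AA n cu Cu ^ (k0 + 1), ?_, ?_⟩
  · have : 1 ≤ AA n cu Cu ^ (k0 + 1) := one_le_pow₀ hA.le
    linarith
  · intro U _ hne hub hunif h hcl hpos hh hb x hx r hr xr hxr hxxr hδ y hy hxy
    have h1 := dist_le_of_innerDist (by positivity) hxxr
    have h2 := dist_le_of_innerDist hr.le hxy.le
    refine carleson hc0 hc1 hCu hunif hub hne hcl hb hh hpos hr hxr hδ m k0 hm.le hk hy ?_
    have := dist_triangle y x xr
    rw [dist_comm y x] at this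
    linarith
end
end
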